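/- arXiv:2404.15613 — 2 statements merged into one kernel-verified Lean document; each statement's English description precedes it below -/
import Mathlib

section
/- For all real constants α and ε with 0 < α < 2 and ε > 0, for all sufficiently large m, setting n = 2^m, no De Morgan formula of depth at most (3 + α/2 − ε)·log₂ n in which every gate at distance less than α·log₂ n from the root is an AND gate computes the modified Andreev function Andr'. -/
/-- A De Morgan formula over variables indexed by `ι`: leaves are literals
(`b = true` for `x i`, `b = false` for `¬ x i`), internal gates are binary
AND/OR gates. -/
inductive DMF (ι : Type) : Type
  | leaf (i : ι) (b : Bool) : DMF ι
  | and (φ ψ : DMF ι) : DMF ι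
  | or (φ ψ : DMF ι) : DMF ι

namespace DMF

/-- Evaluation of a De Morgan formula on an assignment. -/
def eval {ι : Type} : DMF ι → (ι → Bool) → Bool
  | leaf i b, x => if b then x i else !(x i)
  | and φ ψ, x => φ.eval x && ψ.eval x
  | or φ ψ, x => φ.eval x || ψ.eval x

/-- The size of a formula is its number of leaves. -/
def size {ι : Type} : DMF ι → ℕ
  | leaf _ _ => 1
  | and φ ψ => φ.size + ψ.size
  | or φ ψ => φ.size + ψ.size

/-- The depth of a formula: maximum number of edges on a root-to-leaf path. -/
def depth {ι : Type} : DMF ι → ℕ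
  | leaf _ _ => 0
  | and φ ψ => max φ.depth ψ.depth + 1
  | or φ ψ => max φ.depth ψ.depth + 1

/-- `topAnd φ r` holds iff every gate of `φ` at distance less than `r` from the
root is an AND gate. -/
def topAnd {ι : Type} : DMF ι → ℝ → Prop
  | leaf _ _, _ => True
  | and φ ψ, r => φ.topAnd (r - 1) ∧ ψ.topAnd (r - 1)
  | or φ ψ, r => r ≤ 0 ∧ φ.topAnd (r - 1) ∧ ψ.topAnd (r - 1)

end DMF

open Classical in
/-- Formula complexity `L(h)`: the minimum number of leaves of a De Morgan
formula computing `h`, with the convention `L(h) = 0` for constant `h`. -/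
noncomputable def Lc {ι : Type} (h : (ι → Bool) → Bool) : ℕ :=
  if ∃ c, ∀ x, h x = c then 0
  else sInf {s | ∃ φ : DMF ι, φ.size = s ∧ ∀ x, φ.eval x = h x}

/-- The index type for the inputs of the modified Andreev function with
parameter `m` (and `n = 2^m`): `n` bits of the truth table of
`f : {0,1}^m → {0,1}`, `n·m` bits of the truth table of
`g : {0,1}^m → {0,1}^m`, and `2m` blocks of `n` bits `x_1, …, x_{2m}`. -/
abbrev AndrIdx (m : ℕ) : Type :=
  Fin (2 ^ m) ⊕ ((Fin (2 ^ m) × Fin m) ⊕ (Fin (m + m) × Fin (2 ^ m)))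

/-- The position in a truth table (of length `2^m`) of a point `u ∈ {0,1}^m`. -/
def tabIdx {m : ℕ} (u : Fin m → Bool) : Fin (2 ^ m) :=
  finFunctionFinEquiv (fun i => finTwoEquiv.symm (u i))

/-- The parity (XOR) of the bits of a Boolean string. -/
def parity {n : ℕ} (x : Fin n → Bool) : Bool :=
  decide ((Finset.univ.filter fun j : Fin n => x j = true).card % 2 = 1)

/-- The modified Andreev function `Andr'` (Definition 4.1): the first block is
the truth table of `f : {0,1}^m → {0,1}`, the second the truth table of
`g : {0,1}^m → {0,1}^m`, and on inputs `x_1, …, x_{2m} ∈ {0,1}^n` it outputs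
`f(g(u) ⊕ v)` where `u = (⊕x_1, …, ⊕x_m)` and `v = (⊕x_{m+1}, …, ⊕x_{2m})`. -/
def Andr (m : ℕ) (z : AndrIdx m → Bool) : Bool :=
  let f : (Fin m → Bool) → Bool := fun u => z (Sum.inl (tabIdx u))
  let g : (Fin m → Bool) → (Fin m → Bool) := fun u j => z (Sum.inr (Sum.inl (tabIdx u, j)))
  let x : Fin (m + m) → (Fin (2 ^ m) → Bool) := fun i j => z (Sum.inr (Sum.inr (i, j)))
  let u : Fin m → Bool := fun i => parity (x (Fin.castAdd m i))
  let v : Fin m → Bool := fun i => parity (x (Fin.natAdd m i))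
  f (fun j => xor (g u j) (v j))

/-! A formula of size `s` carries a dual adversary certificate of cost `s`, because certificates
compose through gates. The quantum walk of a certificate uses `O(√s)` queries, and its acceptance
amplitude is a polynomial of degree `O(√s)` that approximates the formula. Hence a formula of depth
`2q` is approximated in degree about `2^q`.

Fix all bits of the blocks `x_i` except one random bit in each, which then controls the parity of
its block. If `2^q` is much smaller than `n`, the restriction kills the high-degree Fourier mass of
every such approximation, so every subformula of depth at most `2q` becomes a Boolean function of
bounded degree in the `2m` parities. There are few of those functions.

Below `a` layers of AND gates the formula is a conjunction of `2^a` subformulas of depth at most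
`2q + e`. After the restriction each of them is a lattice term of depth `e` in functions of bounded
degree, so all of them lie in one family of at most `2^M` functions, with `M` about `2^e`. For
random `f` and `g` the function `f(g(u) ⊕ v)` is not a conjunction of `2^a` members of such a
family: each conjunct could have only about `M^2` zeros, whereas the conjunction has about
`n^2 / 2`. This needs `2^a * M^2` to be much smaller than `n^2`; the choice `a ≈ α * m`,
`2q ≈ 2 * m`, `e ≈ (1 - α / 2) * m` gives the bound. -/

/-! ### Formulas and adversary certificates -/

namespace DMF

variable {ι : Type}

theorem size_pos : ∀ φ : DMF ι, 0 < φ.size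
  | leaf _ _ => Nat.one_pos
  | and φ _ => Nat.add_pos_left φ.size_pos _
  | or φ _ => Nat.add_pos_left φ.size_pos _

theorem size_le_two_pow_depth (φ : DMF ι) : φ.size ≤ 2 ^ φ.depth := by
  have gate {a b c d : ℕ} (ha : a ≤ 2 ^ c) (hb : b ≤ 2 ^ d) : a + b ≤ 2 ^ (max c d + 1) := by
    rw [pow_succ, mul_two]
    exact Nat.add_le_add (ha.trans (Nat.pow_le_pow_right two_pos (le_max_left c d)))
      (hb.trans (Nat.pow_le_pow_right two_pos (le_max_right c d)))
  induction φ with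
  | leaf => exact le_rfl
  | and φ ψ hφ hψ => exact gate hφ hψ
  | or φ ψ hφ hψ => exact gate hφ hψ

end DMF

/-- A feasible solution of the dual adversary semidefinite program for `F`: every query `l` asks
whether the literal `lit l` holds (`(i, b)` encodes `x i = b`), the vectors `acc x` of accepted
inputs are supported on satisfied literals, the vectors `rej y` of rejected inputs on violated ones,
and `⟪acc x, rej y⟫ = 1`. The normalization `‖rej y‖² ≤ 1` puts the whole cost `s` on the accepting
side; values of `acc` on rejected and of `rej` on accepted inputs are irrelevant. -/
structure AdversaryCertificate {ι : Type*} (F : (ι → Bool) → Bool) (s : ℝ) where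
  Query : Type
  [fintypeQuery : Fintype Query]
  lit : Query → ι × Bool
  acc : (ι → Bool) → Query → ℝ
  rej : (ι → Bool) → Query → ℝ
  sum_acc_sq_le : ∀ {x}, F x = true → ∑ l, acc x l ^ 2 ≤ s
  sum_rej_sq_le : ∀ {y}, F y = false → ∑ l, rej y l ^ 2 ≤ 1
  acc_eq_zero : ∀ {x l}, F x = true → x (lit l).1 ≠ (lit l).2 → acc x l = 0
  rej_eq_zero : ∀ {y l}, F y = false → y (lit l).1 = (lit l).2 → rej y l = 0
  sum_acc_mul_rej : ∀ {x y}, F x = true → F y = false → ∑ l, acc x l * rej y l = 1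

namespace AdversaryCertificate

variable {ι : Type*} {F G : (ι → Bool) → Bool} {s t : ℝ}

attribute [instance] fintypeQuery

/-- The certificate of a literal: a single query with both vectors equal to `1`. -/
def literal (i : ι) (b : Bool) : AdversaryCertificate (fun x => x i == b) 1 where
  Query := Unit
  lit _ := (i, b)
  acc _ _ := 1
  rej _ _ := 1
  sum_acc_sq_le _ := by simp
  sum_rej_sq_le _ := by simp
  acc_eq_zero hx hne := absurd (beq_iff_eq.1 hx) hne
  rej_eq_zero hy heq := absurd heq (beq_eq_false_iff_ne.1 hy)
  sum_acc_mul_rej _ _ := by simp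

/-- The certificate of the complement: both sides are exchanged and rescaled by `√s`. -/
noncomputable def not (c : AdversaryCertificate F s) (hs : 0 < s) :
    AdversaryCertificate (fun x => !F x) s where
  Query := c.Query
  lit l := ((c.lit l).1, !(c.lit l).2)
  acc x l := √s * c.rej x l
  rej y l := (√s)⁻¹ * c.acc y l
  sum_acc_sq_le hx := by
    simp only [mul_pow, Real.sq_sqrt hs.le, ← Finset.mul_sum]
    exact mul_le_of_le_one_right hs.le (c.sum_rej_sq_le (by simpa using hx))
  sum_rej_sq_le hy := by
    simp only [mul_pow, inv_pow, Real.sq_sqrt hs.le, ← Finset.mul_sum]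
    exact inv_mul_le_one_of_le₀ (c.sum_acc_sq_le (by simpa using hy)) hs.le
  acc_eq_zero hx hne := by
    rw [c.rej_eq_zero (by simpa using hx) (by simpa using hne), mul_zero]
  rej_eq_zero hy heq := by
    rw [c.acc_eq_zero (by simpa using hy) (by simp [heq]), mul_zero]
  sum_acc_mul_rej {x y} hx hy := by
    have hs' : √s ≠ 0 := (Real.sqrt_pos.2 hs).ne'
    calc ∑ l, √s * c.rej x l * ((√s)⁻¹ * c.acc y l) = ∑ l, c.acc y l * c.rej x l :=
          Finset.sum_congr rfl fun l _ => by field_simp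
      _ = 1 := c.sum_acc_mul_rej (by simpa using hy) (by simpa using hx)

/-- The certificate of a conjunction: a rejected input is certified by one violated conjunct. -/
noncomputable def and (c : AdversaryCertificate F s) (d : AdversaryCertificate G t) :
    AdversaryCertificate (fun x => F x && G x) (s + t) where
  Query := c.Query ⊕ d.Query
  lit := Sum.elim c.lit d.lit
  acc x := Sum.elim (c.acc x) (d.acc x)
  rej y := if F y = false then Sum.elim (c.rej y) 0 else Sum.elim 0 (d.rej y)
  sum_acc_sq_le hx := by
    simp only [Fintype.sum_sum_type, Sum.elim_inl, Sum.elim_inr]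
    have hx := Bool.and_eq_true_iff.1 hx
    exact add_le_add (c.sum_acc_sq_le hx.1) (d.sum_acc_sq_le hx.2)
  sum_rej_sq_le {y} hy := by
    by_cases hF : F y = false
    · simpa [hF] using c.sum_rej_sq_le hF
    · simpa [hF] using d.sum_rej_sq_le (y := y) (by simp_all)
  acc_eq_zero {x l} hx hne := by
    have hx := Bool.and_eq_true_iff.1 hx
    cases l with
    | inl l => exact c.acc_eq_zero hx.1 hne
    | inr l => exact d.acc_eq_zero hx.2 hne
  rej_eq_zero {y l} hy heq := by
    by_cases hF : F y = false
    · cases l with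
      | inl l => simpa [hF] using c.rej_eq_zero hF heq
      | inr l => simp [hF]
    · cases l with
      | inl l => simp [hF]
      | inr l => simpa [hF] using d.rej_eq_zero (by simp_all) heq
  sum_acc_mul_rej {x y} hx hy := by
    have hx := Bool.and_eq_true_iff.1 hx
    by_cases hF : F y = false
    · simpa [hF] using c.sum_acc_mul_rej hx.1 hF
    · simpa [hF] using d.sum_acc_mul_rej hx.2 (y := y) (by simp_all)

/-- The certificate of a disjunction, by De Morgan's law. -/
noncomputable def or (c : AdversaryCertificate F s) (d : AdversaryCertificate G t) (hs : 0 < s)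
    (ht : 0 < t) : AdversaryCertificate (fun x => F x || G x) (s + t) := by
  simpa only [Bool.not_and, Bool.not_not] using ((c.not hs).and (d.not ht)).not (add_pos hs ht)

end AdversaryCertificate

theorem DMF.nonempty_adversaryCertificate {ι : Type} (φ : DMF ι) :
    Nonempty (AdversaryCertificate φ.eval φ.size) := by
  induction φ with
  | leaf i b =>
    have heval : (DMF.leaf i b).eval = fun x => x i == b := by
      funext x; cases b <;> simp [DMF.eval]
    simpa only [heval, DMF.size, Nat.cast_one] using ⟨AdversaryCertificate.literal i b⟩
  | and φ ψ hφ hψ =>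
    obtain ⟨c⟩ := hφ
    obtain ⟨d⟩ := hψ
    rw [DMF.size, Nat.cast_add]
    exact ⟨c.and d⟩
  | or φ ψ hφ hψ =>
    obtain ⟨c⟩ := hφ
    obtain ⟨d⟩ := hψ
    rw [DMF.size, Nat.cast_add]
    exact ⟨c.or d (by exact_mod_cast φ.size_pos) (by exact_mod_cast ψ.size_pos)⟩

/-! ### Fourier analysis on the cube -/

/-- The sign `(-1)^b` of a bit. -/
noncomputable def sgn (b : Bool) : ℝ := if b then -1 else 1

@[simp] theorem sgn_true : sgn true = -1 := rfl

@[simp] theorem sgn_false : sgn false = 1 := rfl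

theorem sgn_xor (a b : Bool) : sgn (xor a b) = sgn a * sgn b := by
  cases a <;> cases b <;> simp

theorem sgn_mul_self (b : Bool) : sgn b * sgn b = 1 := by
  cases b <;> simp

theorem sgn_injective : Function.Injective sgn := by
  intro a b; cases a <;> cases b <;> norm_num [sgn]

section Fourier

open scoped symmDiff

variable {V : Type*}

/-- The Walsh character `X ↦ (-1)^(∑ v ∈ S, X v)` of a set of coordinates. -/
noncomputable def walsh (S : Finset V) (X : V → Bool) : ℝ := ∏ v ∈ S, sgn (X v)

theorem walsh_xor (S : Finset V) (X Y : V → Bool) :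
    walsh S (fun v => xor (X v) (Y v)) = walsh S X * walsh S Y := by
  simp only [walsh, sgn_xor, Finset.prod_mul_distrib]

theorem walsh_mul_self (S : Finset V) (X : V → Bool) : walsh S X * walsh S X = 1 := by
  simp only [walsh, ← Finset.prod_mul_distrib, sgn_mul_self, Finset.prod_const_one]

theorem walsh_mul_walsh [DecidableEq V] (S R : Finset V) (X : V → Bool) :
    walsh S X * walsh R X = walsh (S ∆ R) X := by
  have hwalsh {A : Finset V} (hA : A ⊆ S ∪ R) :
      walsh A X = ∏ v ∈ S ∪ R, if v ∈ A then sgn (X v) else 1 := by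
    rw [Finset.prod_ite_mem, Finset.inter_eq_right.2 hA, walsh]
  rw [hwalsh Finset.subset_union_left, hwalsh Finset.subset_union_right, hwalsh symmDiff_le_sup,
    ← Finset.prod_mul_distrib]
  refine Finset.prod_congr rfl fun v _ => ?_
  by_cases hS : v ∈ S <;> by_cases hR : v ∈ R <;> simp [Finset.mem_symmDiff, hS, hR, sgn_mul_self]

variable (V) in
/-- The space of real functions on the cube of Fourier degree at most `d`. -/
noncomputable def lowDegree (d : ℕ) : Submodule ℝ ((V → Bool) → ℝ) :=
  Submodule.span ℝ (walsh '' {S | S.card ≤ d})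

theorem lowDegree_mono : Monotone (lowDegree V) := fun _ _ hde =>
  Submodule.span_mono (Set.image_mono fun _ hS => le_trans hS hde)

theorem const_mem_lowDegree (c : ℝ) (d : ℕ) : (fun _ => c) ∈ lowDegree V d := by
  have h : walsh ∅ ∈ lowDegree V d := Submodule.subset_span ⟨∅, by simp, rfl⟩
  convert Submodule.smul_mem _ c h using 1
  ext X
  simp [walsh]

theorem sgn_apply_mem_lowDegree (v : V) : (fun X => sgn (X v)) ∈ lowDegree V 1 :=
  Submodule.subset_span ⟨{v}, by simp, by ext X; simp [walsh]⟩

theorem mul_mem_lowDegree {d e : ℕ} {f g : (V → Bool) → ℝ} (hf : f ∈ lowDegree V d)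
    (hg : g ∈ lowDegree V e) : f * g ∈ lowDegree V (d + e) := by
  classical
  have hfg := Submodule.mul_mem_mul hf hg
  rw [lowDegree, lowDegree, Submodule.span_mul_span] at hfg
  refine Submodule.span_mono ?_ hfg
  rintro _ ⟨_, ⟨S, hS, rfl⟩, _, ⟨R, hR, rfl⟩, rfl⟩
  refine ⟨S ∆ R, ?_, funext fun X => (walsh_mul_walsh S R X).symm⟩
  exact (Finset.card_le_card symmDiff_le_sup).trans
    ((Finset.card_union_le S R).trans (add_le_add hS hR))

variable [Fintype V]

theorem mem_lowDegree_iff {d : ℕ} {f : (V → Bool) → ℝ} :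
    f ∈ lowDegree V d ↔ ∃ q : Finset V → ℝ, ∀ X, f X = ∑ S with S.card ≤ d, q S * walsh S X := by
  have hset : {S : Finset V | S.card ≤ d} =
      ↑(Finset.univ.filter fun S : Finset V => S.card ≤ d) := by
    simp
  rw [lowDegree, hset, Submodule.mem_span_image_finset_iff_exists_fun']
  simp only [funext_iff, Finset.sum_apply, Pi.smul_apply, smul_eq_mul, eq_comm]

variable [DecidableEq V]

theorem walsh_eq_prod_univ (S : Finset V) (X : V → Bool) :
    walsh S X = ∏ v, if v ∈ S then sgn (X v) else 1 := by
  rw [walsh, Fintype.prod_ite_mem]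

theorem sum_walsh (S : Finset V) :
    ∑ X : V → Bool, walsh S X = if S = ∅ then 2 ^ Fintype.card V else 0 := by
  simp only [walsh_eq_prod_univ]
  rw [← Fintype.prod_sum fun v b => if v ∈ S then sgn b else 1]
  split_ifs with hS
  · simp [hS]
  · obtain ⟨v, hv⟩ := Finset.nonempty_iff_ne_empty.2 hS
    exact Finset.prod_eq_zero (Finset.mem_univ v) (by simp [hv])

theorem sum_walsh_mul_walsh (S R : Finset V) :
    ∑ X : V → Bool, walsh S X * walsh R X = if S = R then 2 ^ Fintype.card V else 0 := by
  simp only [walsh_mul_walsh, sum_walsh, ← Finset.bot_eq_empty, symmDiff_eq_bot]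

theorem sum_sq_sum_mul_walsh (q : Finset V → ℝ) (A : Finset (Finset V)) :
    ∑ X : V → Bool, (∑ S ∈ A, q S * walsh S X) ^ 2 = 2 ^ Fintype.card V * ∑ S ∈ A, q S ^ 2 := by
  calc ∑ X : V → Bool, (∑ S ∈ A, q S * walsh S X) ^ 2
      = ∑ S ∈ A, ∑ R ∈ A, q S * q R * ∑ X, walsh S X * walsh R X := by
        simp only [sq, Finset.sum_mul_sum]
        rw [Finset.sum_comm]
        refine Finset.sum_congr rfl fun S _ => ?_
        rw [Finset.sum_comm]
        simp only [mul_mul_mul_comm (q S), Finset.mul_sum]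
    _ = 2 ^ Fintype.card V * ∑ S ∈ A, q S ^ 2 := by
        rw [Finset.mul_sum]
        refine Finset.sum_congr rfl fun S hS => ?_
        simp only [sum_walsh_mul_walsh, mul_ite, mul_zero, Finset.sum_ite_eq, hS, if_true]
        ring

end Fourier

/-! ### The quantum walk of a certificate -/

section Birkhoff

variable {E : Type*} [NormedAddCommGroup E] [NormedSpace ℝ E] (U : E →ₗᵢ[ℝ] E) {u v w : E}

theorem norm_birkhoffAverage_sub_le_of_isFixedPt (hw : Function.IsFixedPt U w) (u : E) {T : ℕ}
    (hT : T ≠ 0) : ‖birkhoffAverage ℝ U (id : E → E) T u - w‖ ≤ ‖u - w‖ := by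
  have hT' : (T : ℝ) ≠ 0 := Nat.cast_ne_zero.2 hT
  have hdist := dist_birkhoffAverage_birkhoffAverage_le ℝ U (id : E → E) T u w
  have hterm (k : ℕ) : dist (U^[k] u) (U^[k] w) = dist u w := by
    simpa only [LinearIsometry.coe_pow] using (U ^ k).dist_map u w
  simp only [hw.birkhoffAverage_eq ℝ _ hT', id_eq, hterm, Finset.sum_const, Finset.card_range,
    nsmul_eq_mul, mul_div_cancel_left₀ _ hT'] at hdist
  simpa only [dist_eq_norm] using hdist

theorem norm_birkhoffAverage_le_of_two_smul_eq (huv : (2 : ℝ) • u = U v - v) (T : ℕ) :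
    ‖birkhoffAverage ℝ U (id : E → E) T u‖ ≤ ‖v‖ / T := by
  have htelescope : (2 : ℝ) • birkhoffAverage ℝ U (id : E → E) T u =
      (T : ℝ)⁻¹ • (U^[T] v - v) := by
    have hterm (k : ℕ) : (2 : ℝ) • U^[k] u = U^[k] (U v) - U^[k] v := by
      rw [← iterate_map_sub, ← huv]
      simp only [two_smul, iterate_map_add]
    calc (2 : ℝ) • birkhoffAverage ℝ U (id : E → E) T u
        = birkhoffAverage ℝ U (id : E → E) T (U v) - birkhoffAverage ℝ U (id : E → E) T v := by
          simp only [birkhoffAverage, birkhoffSum, id_eq, smul_comm (2 : ℝ), Finset.smul_sum,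
            hterm, smul_sub, Finset.sum_sub_distrib]
      _ = (T : ℝ)⁻¹ • (U^[T] v - v) := birkhoffAverage_apply_sub_birkhoffAverage ..
  have hiter : ‖U^[T] v‖ = ‖v‖ := by
    simpa only [LinearIsometry.coe_pow] using (U ^ T).norm_map v
  have hnorm : 2 * ‖birkhoffAverage ℝ U (id : E → E) T u‖ = (T : ℝ)⁻¹ * ‖U^[T] v - v‖ := by
    simpa [norm_smul] using congrArg norm htelescope
  have hsub : (T : ℝ)⁻¹ * ‖U^[T] v - v‖ ≤ (T : ℝ)⁻¹ * (‖v‖ + ‖v‖) := by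
    gcongr
    simpa only [hiter] using norm_sub_le (U^[T] v) v
  rw [div_eq_inv_mul]
  linarith

end Birkhoff

namespace AdversaryCertificate

variable {ι : Type*} {F : (ι → Bool) → Bool} {s : ℝ} (c : AdversaryCertificate F s)

/-- The state space of the walk: one basis vector per query, and the start vertex `none`. -/
abbrev State : Type := EuclideanSpace ℝ (Option c.Query)

/-- The basis vector of the start vertex. -/
noncomputable def start : c.State :=
  letI := Classical.decEq c.Query
  EuclideanSpace.single none 1

/-- The start vector corrected by `η • acc x`, which the walk on an accepted input `x` fixes. -/
noncomputable def accVec (η : ℝ) (x : ι → Bool) : c.State :=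
  WithLp.toLp 2 fun o => o.elim 1 fun l => η * c.acc x l

/-- The start vector corrected by `-η⁻¹ • rej y`, which is orthogonal to every `accVec η x`. -/
noncomputable def rejVec (η : ℝ) (y : ι → Bool) : c.State :=
  WithLp.toLp 2 fun o => o.elim 1 fun l => -(η⁻¹ * c.rej y l)

/-- Whether `x` violates the literal queried at `o`; the start vertex is never violated. -/
def violated (x : ι → Bool) (o : Option c.Query) : Bool :=
  o.elim false fun l => xor (x (c.lit l).1) (c.lit l).2

/-- The input-dependent half of a step of the walk: the basis vectors of the violated literals
change sign. -/
noncomputable def oracle (x : ι → Bool) : c.State ≃ₗᵢ[ℝ] c.State :=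
  LinearIsometryEquiv.piLpCongrRight 2 fun o =>
    if c.violated x o then LinearIsometryEquiv.neg ℝ else LinearIsometryEquiv.refl ℝ ℝ

/-- The span of the vectors `rejVec η y` of the rejected inputs. -/
noncomputable def rejSpan (η : ℝ) : Submodule ℝ c.State :=
  Submodule.span ℝ (c.rejVec η '' {y | F y = false})

/-- One step of the walk: the oracle followed by the reflection that negates `rejSpan η`. -/
noncomputable def walk (η : ℝ) (x : ι → Bool) : c.State ≃ₗᵢ[ℝ] c.State :=
  (c.oracle x).trans (c.rejSpan η)ᗮ.reflection

variable {c} {η : ℝ} {x y : ι → Bool}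

@[simp] theorem start_none : c.start none = 1 := by simp [start]

@[simp] theorem start_some (l : c.Query) : c.start (some l) = 0 := by simp [start]

theorem oracle_apply (w : c.State) (o : Option c.Query) :
    c.oracle x w o = sgn (c.violated x o) * w o := by
  by_cases h : c.violated x o = true <;> simp [oracle, h]

theorem inner_rejVec_accVec (hη : η ≠ 0) (hx : F x = true) (hy : F y = false) :
    inner ℝ (c.rejVec η y) (c.accVec η x) = 0 := by
  have hterm (l : c.Query) : η * c.acc x l * (η⁻¹ * c.rej y l) = c.acc x l * c.rej y l := by
    field_simp
  simp [PiLp.inner_apply, accVec, rejVec, hterm, c.sum_acc_mul_rej hx hy]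

theorem oracle_start : c.oracle x c.start = c.start := by
  ext (_ | l) <;> simp [oracle_apply, violated]

theorem oracle_accVec (hx : F x = true) : c.oracle x (c.accVec η x) = c.accVec η x := by
  ext (_ | l)
  · simp [oracle_apply, violated]
  · by_cases hl : x (c.lit l).1 = (c.lit l).2
    · simp [oracle_apply, violated, hl]
    · simp [oracle_apply, accVec, c.acc_eq_zero hx hl]

theorem oracle_rejVec (hy : F y = false) :
    c.oracle y (c.rejVec η y) = (2 : ℝ) • c.start - c.rejVec η y := by
  ext (_ | l)
  · norm_num [oracle_apply, violated, rejVec]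
  · by_cases hl : y (c.lit l).1 = (c.lit l).2
    · simp [oracle_apply, rejVec, c.rej_eq_zero hy hl]
    · have hviol : c.violated y (some l) = true := by simpa [violated] using hl
      simp [oracle_apply, hviol]

theorem walk_accVec (hη : η ≠ 0) (hx : F x = true) :
    c.walk η x (c.accVec η x) = c.accVec η x := by
  have hmem : c.accVec η x ∈ (c.rejSpan η)ᗮ := by
    rw [rejSpan, Submodule.mem_orthogonal]
    intro u hu
    have hle : Submodule.span ℝ (c.rejVec η '' {y | F y = false}) ≤ (ℝ ∙ c.accVec η x)ᗮ := by
      rw [Submodule.span_le]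
      rintro _ ⟨y, hy, rfl⟩
      exact Submodule.mem_orthogonal_singleton_iff_inner_left.2 (inner_rejVec_accVec hη hx hy)
    exact Submodule.mem_orthogonal_singleton_iff_inner_left.1 (hle hu)
  rw [walk, LinearIsometryEquiv.trans_apply, oracle_accVec hx,
    Submodule.reflection_mem_subspace_eq_self hmem]

theorem two_smul_walk_start (hy : F y = false) :
    (2 : ℝ) • c.walk η y c.start = c.walk η y (c.rejVec η y) - c.rejVec η y := by
  have hmem : c.rejVec η y ∈ (c.rejSpan η)ᗮᗮ :=
    Submodule.le_orthogonal_orthogonal _ (Submodule.subset_span ⟨y, hy, rfl⟩)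
  have hreflect := Submodule.reflection_mem_subspace_orthogonalComplement_eq_neg hmem
  rw [walk, LinearIsometryEquiv.trans_apply, LinearIsometryEquiv.trans_apply, oracle_start,
    oracle_rejVec hy, map_sub, hreflect, map_smul, sub_neg_eq_add, add_sub_cancel_right]

theorem norm_start_sub_accVec_le (hη : 0 ≤ η) (hx : F x = true) :
    ‖c.start - c.accVec η x‖ ≤ η * √s := by
  have hs : ∑ l, c.acc x l ^ 2 ≤ s := c.sum_acc_sq_le hx
  have hs0 : 0 ≤ s := (Finset.sum_nonneg fun l _ => sq_nonneg (c.acc x l)).trans hs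
  have hsq : ‖c.start - c.accVec η x‖ ^ 2 = η ^ 2 * ∑ l, c.acc x l ^ 2 := by
    simp [EuclideanSpace.norm_sq_eq, accVec, mul_pow, Finset.mul_sum]
  refine le_of_sq_le_sq ?_ (by positivity)
  rw [hsq, mul_pow, Real.sq_sqrt hs0]
  gcongr

theorem norm_rejVec_le (hη : 0 ≤ η) (hy : F y = false) : ‖c.rejVec η y‖ ≤ 1 + η⁻¹ := by
  have hsq : ‖c.rejVec η y‖ ^ 2 = 1 + (η⁻¹) ^ 2 * ∑ l, c.rej y l ^ 2 := by
    simp [EuclideanSpace.norm_sq_eq, rejVec, mul_pow, Finset.mul_sum]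
  have hle : (η⁻¹) ^ 2 * ∑ l, c.rej y l ^ 2 ≤ (η⁻¹) ^ 2 :=
    mul_le_of_le_one_right (sq_nonneg _) (c.sum_rej_sq_le hy)
  have hη' : 0 ≤ η⁻¹ := inv_nonneg.2 hη
  refine le_of_sq_le_sq ?_ (by positivity)
  rw [hsq]
  nlinarith

variable {V : Type*} {z : (V → Bool) → ι → Bool}

theorem sgn_violated_mem_lowDegree (hz : ∀ i, (fun X => sgn (z X i)) ∈ lowDegree V 1)
    (o : Option c.Query) : (fun X => sgn (c.violated (z X) o)) ∈ lowDegree V 1 := by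
  cases o with
  | none => simpa only [violated, Option.elim_none, sgn_false] using const_mem_lowDegree 1 1
  | some l =>
    convert Submodule.smul_mem _ (sgn (c.lit l).2) (hz (c.lit l).1) using 1
    ext X
    simp [violated, sgn_xor, mul_comm]

theorem walk_iterate_mem_lowDegree (hz : ∀ i, (fun X => sgn (z X i)) ∈ lowDegree V 1)
    (u : c.State) (t : ℕ) (o : Option c.Query) :
    (fun X => (c.walk η (z X))^[t] u o) ∈ lowDegree V t := by
  classical
  induction t generalizing o with
  | zero => exact const_mem_lowDegree (u o) 0
  | succ t ih =>
    have hstep (X : V → Bool) : (c.walk η (z X))^[t + 1] u o =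
        ∑ j, (c.rejSpan η)ᗮ.reflection (EuclideanSpace.single j 1) o *
          ((c.walk η (z X))^[t] u j * sgn (c.violated (z X) j)) := by
      rw [Function.iterate_succ_apply', walk, LinearIsometryEquiv.trans_apply,
        ← (EuclideanSpace.basisFun _ ℝ).sum_repr (c.oracle (z X) _)]
      simp [oracle_apply, mul_comm, mul_left_comm]
    have hsum := Submodule.sum_mem (lowDegree V (t + 1)) fun j (_ : j ∈ Finset.univ) =>
      Submodule.smul_mem _ ((c.rejSpan η)ᗮ.reflection (EuclideanSpace.single j 1) o)
        (mul_mem_lowDegree (ih j) (sgn_violated_mem_lowDegree hz j))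
    convert hsum using 1
    ext X
    simp only [hstep, Finset.sum_apply, Pi.smul_apply, Pi.mul_apply, smul_eq_mul]

/-- The amplitude of the start vertex after a step of the walk from it, averaged over the next `T`
steps. It is close to `1` on accepted and to `0` on rejected inputs. -/
noncomputable def output (c : AdversaryCertificate F s) (η : ℝ) (T : ℕ) (x : ι → Bool) : ℝ :=
  birkhoffAverage ℝ (c.walk η x) (id : c.State → c.State) T (c.walk η x c.start) none

theorem output_mem_lowDegree (hz : ∀ i, (fun X => sgn (z X i)) ∈ lowDegree V 1) (T : ℕ) :
    (fun X => c.output η T (z X)) ∈ lowDegree V T := by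
  have hsum := Submodule.smul_mem _ (T : ℝ)⁻¹ <|
    Submodule.sum_mem (lowDegree V T) fun t (ht : t ∈ Finset.range T) =>
      lowDegree_mono (Nat.succ_le_of_lt (Finset.mem_range.1 ht))
        (walk_iterate_mem_lowDegree (η := η) hz c.start (t + 1) none)
  convert hsum using 1
  ext X
  simp [output, birkhoffAverage, birkhoffSum, Finset.sum_apply]

theorem abs_output_sub_one_le (hη : 0 < η) {T : ℕ} (hT : T ≠ 0) (hx : F x = true) :
    |c.output η T x - 1| ≤ η * √s := by
  set U := (c.walk η x).toLinearIsometry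
  set avg := birkhoffAverage ℝ U (id : c.State → c.State) T (U c.start)
  have hfix : U (c.accVec η x) = c.accVec η x := walk_accVec hη.ne' hx
  calc |c.output η T x - 1| = ‖(avg - c.accVec η x) none‖ := rfl
    _ ≤ ‖avg - c.accVec η x‖ := PiLp.norm_apply_le _ _
    _ ≤ ‖U c.start - c.accVec η x‖ := norm_birkhoffAverage_sub_le_of_isFixedPt U hfix _ hT
    _ = ‖U (c.start - c.accVec η x)‖ := by rw [map_sub, hfix]
    _ = ‖c.start - c.accVec η x‖ := U.norm_map _
    _ ≤ η * √s := norm_start_sub_accVec_le hη.le hx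

theorem abs_output_le (hη : 0 ≤ η) (T : ℕ) (hy : F y = false) :
    |c.output η T y| ≤ (1 + η⁻¹) / T := by
  set U := (c.walk η y).toLinearIsometry
  set avg := birkhoffAverage ℝ U (id : c.State → c.State) T (U c.start)
  calc |c.output η T y| = ‖avg none‖ := rfl
    _ ≤ ‖avg‖ := PiLp.norm_apply_le _ _
    _ ≤ ‖c.rejVec η y‖ / T :=
      norm_birkhoffAverage_le_of_two_smul_eq U (two_smul_walk_start hy) T
    _ ≤ (1 + η⁻¹) / T := by
      gcongr
      exact norm_rejVec_le hη hy

theorem exists_lowDegree_approx (c : AdversaryCertificate F s) (hs : 0 < s)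
    (hz : ∀ i, (fun X => sgn (z X i)) ∈ lowDegree V 1) {ε : ℝ} (hε : 0 < ε) {T : ℕ}
    (hT : 1 + √s / ε ≤ ε * T) :
    ∃ Q ∈ lowDegree V T, ∀ X, |Q X - ((F (z X)).toNat : ℝ)| ≤ ε := by
  have hs' : 0 < √s := Real.sqrt_pos.2 hs
  have hT0 : T ≠ 0 := by
    rintro rfl
    have : 0 ≤ √s / ε := by positivity
    norm_num at hT
    linarith
  refine ⟨_, output_mem_lowDegree (c := c) (η := ε / √s) hz T, fun X => ?_⟩
  cases hX : F (z X) with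
  | false =>
    calc |c.output (ε / √s) T (z X) - (false.toNat : ℝ)| = |c.output (ε / √s) T (z X)| := by simp
      _ ≤ (1 + (ε / √s)⁻¹) / T := abs_output_le (by positivity) T hX
      _ ≤ ε := by rwa [inv_div, div_le_iff₀ (by positivity)]
  | true =>
    calc |c.output (ε / √s) T (z X) - (true.toNat : ℝ)| = |c.output (ε / √s) T (z X) - 1| := by
          simp
      _ ≤ ε / √s * √s := abs_output_sub_one_le (by positivity) hT0 hX
      _ = ε := div_mul_cancel₀ _ hs'.ne'

end AdversaryCertificate

theorem DMF.exists_lowDegree_approx {ι : Type} {V : Type*} (φ : DMF ι)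
    {z : (V → Bool) → ι → Bool} (hz : ∀ i, (fun X => sgn (z X i)) ∈ lowDegree V 1) {q : ℕ}
    (hφ : φ.depth ≤ 2 * q) (k : ℕ) :
    ∃ Q ∈ lowDegree V (2 ^ (q + 2 * k + 3)),
      ∀ X, |Q X - ((φ.eval (z X)).toNat : ℝ)| ≤ 1 / 2 ^ (k + 1) := by
  obtain ⟨c⟩ := φ.nonempty_adversaryCertificate
  refine c.exists_lowDegree_approx (by exact_mod_cast φ.size_pos) hz (by positivity) ?_
  have hsize : √(φ.size : ℝ) ≤ 2 ^ q := by
    rw [Real.sqrt_le_left (by positivity), ← pow_mul, mul_comm q]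
    exact_mod_cast φ.size_le_two_pow_depth.trans (Nat.pow_le_pow_right two_pos hφ)
  calc 1 + √(φ.size : ℝ) / (1 / 2 ^ (k + 1)) ≤ 2 ^ q * 2 ^ (k + 1) + 2 ^ q * 2 ^ (k + 1) := by
        rw [div_div_eq_mul_div, div_one]
        gcongr
        exact one_le_mul_of_one_le_of_one_le (one_le_pow₀ one_le_two) (one_le_pow₀ one_le_two)
    _ = 1 / 2 ^ (k + 1) * ((2 ^ (q + 2 * k + 3) : ℕ) : ℝ) := by
        push_cast
        rw [show q + 2 * k + 3 = q + (k + 1) + (k + 1) + 1 by ring]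
        field_simp
        ring

/-! ### Random restrictions -/

section AltSum

variable {I R : Type*} [DecidableEq I] [Ring R]

/-- The indicator function of a finite set, as a point of the cube. -/
def boolIndicator (B : Finset I) : I → Bool := fun i => decide (i ∈ B)

theorem walsh_boolIndicator (S B : Finset I) :
    walsh S (boolIndicator B) = ∏ i ∈ B, if i ∈ S then -1 else 1 := by
  have hsgn (i : I) : sgn (boolIndicator B i) = if i ∈ B then -1 else 1 := by
    by_cases hi : i ∈ B <;> simp [boolIndicator, hi]
  simp only [walsh, hsgn, Finset.prod_ite_mem, Finset.inter_comm]

theorem xor_boolIndicator {S B : Finset I} (hB : B ⊆ S) :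
    (fun i => xor (boolIndicator S i) (boolIndicator B i)) = boolIndicator (S \ B) := by
  funext i
  by_cases hi : i ∈ B
  · simp [boolIndicator, hi, hB hi]
  · simp [boolIndicator, hi]

/-- The alternating sum of `p` over the subcube through `a` in the directions of `T`, that is, up to
sign, the mixed derivative of `p` in these directions. -/
def altSum (T : Finset I) (p : (I → Bool) → R) (a : I → Bool) : R :=
  ∑ B ∈ T.powerset, (-1) ^ B.card * p fun i => xor (a i) (boolIndicator B i)

theorem altSum_sum_mul {A : Type*} (T : Finset I) (s : Finset A) (c : A → ℝ)
    (p : A → (I → Bool) → ℝ) (a : I → Bool) :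
    altSum T (fun b => ∑ S ∈ s, c S * p S b) a = ∑ S ∈ s, c S * altSum T (p S) a := by
  simp only [altSum, Finset.mul_sum]
  rw [Finset.sum_comm]
  simp only [mul_left_comm]

theorem altSum_intCast (T : Finset I) (p : (I → Bool) → ℤ) (a : I → Bool) :
    altSum T (fun b => (p b : R)) a = (altSum T p a : ℤ) := by
  simp [altSum]

theorem abs_altSum_sub_altSum_le (T : Finset I) {p q : (I → Bool) → ℝ} {ε : ℝ}
    (h : ∀ b, |p b - q b| ≤ ε) (a : I → Bool) :
    |altSum T p a - altSum T q a| ≤ 2 ^ T.card * ε := by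
  rw [altSum, altSum, ← Finset.sum_sub_distrib]
  calc _ ≤ ∑ _B ∈ T.powerset, ε := (Finset.abs_sum_le_sum_abs _ _).trans <|
        Finset.sum_le_sum fun _ _ => by simpa [← mul_sub, abs_mul] using h _
    _ = 2 ^ T.card * ε := by simp

/-- The alternating sum of a Boolean function is an integer, hence it cannot be small unless it
vanishes. -/
theorem one_le_four_mul_altSum_sq {T : Finset I} {p : (I → Bool) → Bool} {q : (I → Bool) → ℝ}
    (hqp : ∀ b, |q b - ((p b).toNat : ℝ)| ≤ 1 / 2 ^ (T.card + 1)) {a : I → Bool}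
    (hp : altSum T (fun b => ((p b).toNat : ℤ)) a ≠ 0) : 1 ≤ 4 * altSum T q a ^ 2 := by
  set z : ℤ := altSum T (fun b => ((p b).toNat : ℤ)) a
  have hcast : altSum T (fun b => ((p b).toNat : ℝ)) a = z := by
    simpa using altSum_intCast (R := ℝ) T (fun b => ((p b).toNat : ℤ)) a
  have hclose : |(z : ℝ) - altSum T q a| ≤ 1 / 2 := by
    rw [abs_sub_comm, ← hcast]
    refine (abs_altSum_sub_altSum_le T hqp a).trans_eq ?_
    rw [pow_succ]
    field_simp
  have hone : (1 : ℝ) ≤ |(z : ℝ)| := by exact_mod_cast Int.one_le_abs hp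
  have htri := abs_sub_abs_le_abs_sub (z : ℝ) (altSum T q a)
  rw [← sq_abs]
  nlinarith

theorem altSum_walsh (T S : Finset I) (a : I → Bool) :
    altSum T (walsh S) a = if T ⊆ S then 2 ^ T.card * walsh S a else 0 := by
  have hterm (B : Finset I) : (-1 : ℝ) ^ B.card * walsh S (fun i => xor (a i) (boolIndicator B i)) =
      walsh S a * ∏ i ∈ B, if i ∈ S then 1 else -1 := by
    have hsign : ∏ i ∈ B, (if i ∈ S then (1 : ℝ) else -1) =
        (-1) ^ B.card * ∏ i ∈ B, if i ∈ S then -1 else 1 := by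
      rw [← Finset.prod_const, ← Finset.prod_mul_distrib]
      simp
    rw [walsh_xor, walsh_boolIndicator, hsign]
    ring
  simp only [altSum, hterm, ← Finset.mul_sum, ← Finset.prod_one_add]
  split_ifs with hTS
  · rw [Finset.prod_congr rfl (g := fun _ => (2 : ℝ)) fun i hi => by
      rw [if_pos (hTS hi)]; norm_num, Finset.prod_const, mul_comm]
  · obtain ⟨i, hiT, hiS⟩ := Finset.not_subset.1 hTS
    rw [Finset.prod_eq_zero hiT (by simp [hiS]), mul_zero]

end AltSum

section RandomSubcube

variable {I K : Type*} [DecidableEq K]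

/-- Flip, in each block `i` with `b i = true`, the bit of `X` at position `J i`. For random `J` and
`X`, the map `b ↦ flipAt J b X` parametrizes a random subcube. -/
def flipAt (J : I → K) (b : I → Bool) (X : I × K → Bool) : I × K → Bool :=
  fun v => xor (X v) (b v.1 && decide (v.2 = J v.1))

variable [Fintype I] [DecidableEq I]

/-- The blocks in which `S` contains the position chosen by `J`. -/
def selected (S : Finset (I × K)) (J : I → K) : Finset I :=
  Finset.univ.filter fun i => (i, J i) ∈ S

theorem walsh_flipAt (S : Finset (I × K)) (J : I → K) (b : I → Bool) (X : I × K → Bool) :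
    walsh S (flipAt J b X) = walsh S X * walsh (selected S J) b := by
  have hmask (v : I × K) : sgn (b v.1 && decide (v.2 = J v.1)) =
      if v.2 = J v.1 then sgn (b v.1) else 1 := by
    by_cases hv : v.2 = J v.1 <;> simp [hv]
  rw [show flipAt J b X = fun v => xor (X v) (b v.1 && decide (v.2 = J v.1)) from rfl, walsh_xor]
  congr 1
  simp only [walsh, hmask, ← Finset.prod_filter]
  refine Finset.prod_nbij' Prod.fst (fun i => (i, J i)) (fun v hv => ?_) (fun i hi => ?_)
    (fun v hv => ?_) (fun i _ => rfl) (fun v _ => rfl)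
  · obtain ⟨hvS, hvJ⟩ := Finset.mem_filter.1 hv
    simpa [selected, ← hvJ] using hvS
  · simpa [selected] using hi
  · rw [← (Finset.mem_filter.1 hv).2]

theorem altSum_flipAt (A : Finset (Finset (I × K))) (q : Finset (I × K) → ℝ) (T : Finset I)
    (J : I → K) (X : I × K → Bool) (a : I → Bool) :
    altSum T (fun b => ∑ S ∈ A, q S * walsh S (flipAt J b X)) a =
      2 ^ T.card * ∑ S ∈ A with T ⊆ selected S J, q S * walsh (selected S J) a * walsh S X := by
  simp only [walsh_flipAt, ← mul_assoc, altSum_sum_mul, altSum_walsh, Finset.sum_filter,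
    Finset.mul_sum]
  refine Finset.sum_congr rfl fun S _ => ?_
  split_ifs <;> ring

variable [Fintype K]

theorem card_filter_subset_selected_mul_le (S : Finset (I × K)) (T : Finset I) :
    (Finset.univ.filter fun J : I → K => T ⊆ selected S J).card * Fintype.card K ^ T.card ≤
      S.card ^ T.card * Fintype.card K ^ Fintype.card I := by
  have hpi : (Finset.univ.filter fun J : I → K => T ⊆ selected S J) =
      Fintype.piFinset fun i => if i ∈ T then Finset.univ.filter (fun j => (i, j) ∈ S)
        else Finset.univ := by
    ext J
    simp only [Finset.subset_iff, selected, Finset.mem_filter_univ, Fintype.mem_piFinset]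
    exact forall_congr' fun i => by by_cases hi : i ∈ T <;> simp [hi]
  have hfiber (i : I) : (Finset.univ.filter fun j => (i, j) ∈ S).card ≤ S.card :=
    Finset.card_le_card_of_injOn (fun j => (i, j)) (fun j hj => by simpa using hj)
      (fun j _ k _ h => by simpa using h)
  have hle : (Finset.univ.filter fun J : I → K => T ⊆ selected S J).card ≤
      ∏ i : I, if i ∈ T then S.card else Fintype.card K := by
    rw [hpi, Fintype.card_piFinset]
    refine Finset.prod_le_prod' fun i _ => ?_
    split_ifs
    · exact hfiber i
    · exact le_rfl
  calc _ ≤ (∏ i : I, if i ∈ T then S.card else Fintype.card K) * Fintype.card K ^ T.card :=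
        Nat.mul_le_mul_right _ hle
    _ = S.card ^ T.card * Fintype.card K ^ Fintype.card I := by
        rw [Finset.prod_ite, Finset.prod_const, Finset.prod_const, Finset.filter_univ_mem,
          mul_assoc, ← pow_add, Finset.filter_not, Finset.filter_univ_mem,
          ← Finset.compl_eq_univ_sdiff, add_comm, Finset.card_add_card_compl]

theorem sum_sum_altSum_flipAt_sq_mul_le {Q : (I × K → Bool) → ℝ} {d : ℕ}
    (hQ : Q ∈ lowDegree (I × K) d) (T : Finset I) (a : I → Bool) :
    (∑ J : I → K, ∑ X, altSum T (fun b => Q (flipAt J b X)) a ^ 2) * Fintype.card K ^ T.card ≤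
      (4 * d) ^ T.card * Fintype.card K ^ Fintype.card I * ∑ X, Q X ^ 2 := by
  obtain ⟨q, hq⟩ := mem_lowDegree_iff.1 hQ
  set A : Finset (Finset (I × K)) := Finset.univ.filter fun S => S.card ≤ d with hA
  have hmoment (J : I → K) : ∑ X, altSum T (fun b => Q (flipAt J b X)) a ^ 2 =
      4 ^ T.card * 2 ^ Fintype.card (I × K) *
        ∑ S ∈ A, if T ⊆ selected S J then q S ^ 2 else 0 := by
    simp only [hq, altSum_flipAt, mul_pow, ← Finset.mul_sum]
    rw [sum_sq_sum_mul_walsh, ← Finset.sum_filter, ← pow_mul, mul_comm T.card, pow_mul]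
    simp only [mul_pow, sq (walsh _ _), walsh_mul_self]
    norm_num [mul_assoc]
  have hcoeff (S : Finset (I × K)) (hS : S ∈ A) :
      (∑ J : I → K, if T ⊆ selected S J then q S ^ 2 else 0) * (Fintype.card K : ℝ) ^ T.card ≤
        d ^ T.card * Fintype.card K ^ Fintype.card I * q S ^ 2 := by
    have hcard : (Finset.univ.filter fun J : I → K => T ⊆ selected S J).card *
        Fintype.card K ^ T.card ≤ d ^ T.card * Fintype.card K ^ Fintype.card I :=
      (card_filter_subset_selected_mul_le S T).trans <| Nat.mul_le_mul_right _ <|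
        Nat.pow_le_pow_left (by simpa [hA] using hS) _
    rw [← Finset.sum_filter, Finset.sum_const, nsmul_eq_mul, mul_right_comm]
    exact mul_le_mul_of_nonneg_right (by exact_mod_cast hcard) (sq_nonneg _)
  calc _ = 4 ^ T.card * 2 ^ Fintype.card (I × K) * ∑ S ∈ A,
        (∑ J : I → K, if T ⊆ selected S J then q S ^ 2 else 0) *
          (Fintype.card K : ℝ) ^ T.card := by
        simp only [hmoment, ← Finset.mul_sum, ← Finset.sum_mul]
        rw [Finset.sum_comm, mul_assoc]
    _ ≤ 4 ^ T.card * 2 ^ Fintype.card (I × K) * ∑ S ∈ A,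
        d ^ T.card * Fintype.card K ^ Fintype.card I * q S ^ 2 := by
        exact mul_le_mul_of_nonneg_left (Finset.sum_le_sum hcoeff) (by positivity)
    _ = (4 * d) ^ T.card * Fintype.card K ^ Fintype.card I * ∑ X, Q X ^ 2 := by
        simp only [hq, sum_sq_sum_mul_walsh, ← Finset.mul_sum, mul_pow]
        ring

theorem card_altSum_flipAt_ne_zero_mul_le {ψ : (I × K → Bool) → Bool} {Q : (I × K → Bool) → ℝ}
    {d : ℕ} (hQ : Q ∈ lowDegree (I × K) d) (T : Finset I)
    (hQψ : ∀ X, |Q X - ((ψ X).toNat : ℝ)| ≤ 1 / 2 ^ (T.card + 1)) (a : I → Bool) :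
    (Finset.univ.filter fun P : (I → K) × (I × K → Bool) =>
        altSum T (fun b => ((ψ (flipAt P.1 b P.2)).toNat : ℤ)) a ≠ 0).card *
        Fintype.card K ^ T.card ≤
      16 * (4 * d) ^ T.card * Fintype.card ((I → K) × (I × K → Bool)) := by
  have hQ_sq (X : I × K → Bool) : Q X ^ 2 ≤ 4 := by
    have hε : (1 : ℝ) / 2 ^ (T.card + 1) ≤ 1 :=
      (div_le_one (by positivity)).2 (one_le_pow₀ one_le_two)
    have hψ : ((ψ X).toNat : ℝ) ≤ 1 := by exact_mod_cast (ψ X).toNat_le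
    obtain ⟨hlo, hhi⟩ := abs_le.1 (hQψ X)
    nlinarith [(ψ X).toNat.cast_nonneg (α := ℝ)]
  have hcount : ((Finset.univ.filter fun P : (I → K) × (I × K → Bool) =>
      altSum T (fun b => ((ψ (flipAt P.1 b P.2)).toNat : ℤ)) a ≠ 0).card : ℝ) ≤
      4 * ∑ J : I → K, ∑ X, altSum T (fun b => Q (flipAt J b X)) a ^ 2 := by
    rw [← Fintype.sum_prod_type', Finset.mul_sum, Finset.card_eq_sum_ones, Nat.cast_sum,
      Finset.sum_filter]
    refine Finset.sum_le_sum fun P _ => ?_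
    split_ifs with hP
    · simpa using one_le_four_mul_altSum_sq (fun b => hQψ (flipAt P.1 b P.2)) hP
    · positivity
  have hsum : ∑ X, Q X ^ 2 ≤ 2 ^ Fintype.card (I × K) * 4 := by
    simpa using Finset.sum_le_card_nsmul Finset.univ (fun X => Q X ^ 2) 4 fun X _ => hQ_sq X
  rw [← Nat.cast_le (α := ℝ)]
  push_cast
  calc _ ≤ 4 * (∑ J : I → K, ∑ X, altSum T (fun b => Q (flipAt J b X)) a ^ 2) *
        (Fintype.card K : ℝ) ^ T.card := by gcongr
    _ ≤ 4 * ((4 * d) ^ T.card * Fintype.card K ^ Fintype.card I *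
        (2 ^ Fintype.card (I × K) * 4)) := by
        rw [mul_assoc]
        refine mul_le_mul_of_nonneg_left ?_ (by norm_num)
        exact (sum_sum_altSum_flipAt_sq_mul_le hQ T a).trans (by gcongr)
    _ = 16 * (4 * d) ^ T.card * Fintype.card ((I → K) × (I × K → Bool)) := by
        simp only [Fintype.card_prod, Fintype.card_fun, Fintype.card_bool]
        push_cast
        ring

end RandomSubcube

theorem exists_mem_forall_not_of_card_mul_lt {Ω τ : Type*} {A : Finset Ω} {s : Finset τ}
    {P : τ → Ω → Prop} [∀ t, DecidablePred (P t)] {b c : ℕ}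
    (hP : ∀ t ∈ s, (A.filter (P t)).card * c ≤ b) (h : s.card * b < A.card * c) :
    ∃ ω ∈ A, ∀ t ∈ s, ¬P t ω := by
  classical
  by_contra! hcover
  have hsub : A ⊆ s.biUnion fun t => A.filter (P t) := fun ω hω => by
    obtain ⟨t, ht, hPt⟩ := hcover ω hω
    exact Finset.mem_biUnion.2 ⟨t, ht, Finset.mem_filter.2 ⟨hω, hPt⟩⟩
  refine h.not_ge ?_
  calc A.card * c ≤ (∑ t ∈ s, (A.filter (P t)).card) * c :=
        Nat.mul_le_mul_right c ((Finset.card_le_card hsub).trans Finset.card_biUnion_le)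
    _ = ∑ t ∈ s, (A.filter (P t)).card * c := Finset.sum_mul _ _ _
    _ ≤ s.card * b := Finset.sum_le_card_nsmul _ _ _ hP

theorem card_filter_card_lt_le {I : Type*} [Fintype I] (k : ℕ) :
    (Finset.univ.filter fun S : Finset I => S.card < k).card ≤ (Fintype.card I + 1) ^ k := by
  classical
  have hunion : (Finset.univ.filter fun S : Finset I => S.card < k) =
      (Finset.range k).biUnion fun i => Finset.powersetCard i Finset.univ := by
    ext S
    simp [Finset.mem_powersetCard]
  calc _ ≤ ∑ i ∈ Finset.range k, Fintype.card I ^ i := by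
        rw [hunion]
        refine Finset.card_biUnion_le.trans (Finset.sum_le_sum fun i _ => ?_)
        rw [Finset.card_powersetCard, Finset.card_univ]
        exact Nat.choose_le_pow _ _
    _ ≤ ∑ i ∈ Finset.range (k + 1), Fintype.card I ^ i * 1 ^ (k - i) * k.choose i := by
        refine (Finset.sum_le_sum fun i hi => ?_).trans
          (Finset.sum_le_sum_of_subset (Finset.range_subset_range.2 k.le_succ))
        simpa using Nat.le_mul_of_pos_right _ (Nat.choose_pos (Finset.mem_range.1 hi).le)
    _ = (Fintype.card I + 1) ^ k := (add_pow _ _ _).symm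

section BoolDegree

variable {I : Type*} [Fintype I] [DecidableEq I]

variable (I) in
/-- The Boolean functions on the cube whose degree, as real polynomials, is less than `k`; they are
characterized by the vanishing of all `k`-dimensional alternating sums. -/
def boolDegreeLT (k : ℕ) : Finset ((I → Bool) → Bool) :=
  Finset.univ.filter fun p => ∀ T : Finset I, T.card = k → ∀ a,
    altSum T (fun b => ((p b).toNat : ℤ)) a = 0

theorem eq_of_mem_boolDegreeLT {k : ℕ} {p p' : (I → Bool) → Bool} (hp : p ∈ boolDegreeLT I k)
    (hp' : p' ∈ boolDegreeLT I k)
    (h : ∀ S : Finset I, S.card < k → p (boolIndicator S) = p' (boolIndicator S)) : p = p' := by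
  have hind (S : Finset I) : p (boolIndicator S) = p' (boolIndicator S) := by
    induction hN : S.card using Nat.strong_induction_on generalizing S with
    | _ N ih =>
      rcases lt_or_ge S.card k with hk | hk
      · exact h S hk
      obtain ⟨T, hTS, hT⟩ := Finset.exists_subset_card_eq hk
      have hsum : altSum T (fun b => ((p b).toNat : ℤ)) (boolIndicator S) =
          altSum T (fun b => ((p' b).toNat : ℤ)) (boolIndicator S) := by
        rw [(Finset.mem_filter.1 hp).2 T hT, (Finset.mem_filter.1 hp').2 T hT]
      -- All terms but the one at `B = ∅` agree by induction.
      rw [altSum, altSum, ← Finset.add_sum_erase _ _ (Finset.empty_mem_powerset T),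
        ← Finset.add_sum_erase _ _ (Finset.empty_mem_powerset T),
        Finset.sum_congr rfl (g := fun B => (-1 : ℤ) ^ B.card *
          ((p' fun i => xor (boolIndicator S i) (boolIndicator B i)).toNat : ℤ)) fun B hB => ?_,
        add_left_inj, xor_boolIndicator (Finset.empty_subset S), Finset.sdiff_empty] at hsum
      · revert hsum
        cases p (boolIndicator S) <;> cases p' (boolIndicator S) <;> simp
      · obtain ⟨hne, hBT⟩ := Finset.mem_erase.1 hB
        have hBS : B ⊆ S := (Finset.mem_powerset.1 hBT).trans hTS
        rw [xor_boolIndicator hBS, ih (S \ B).card (hN ▸ Finset.card_lt_card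
          (Finset.sdiff_ssubset hBS (Finset.nonempty_iff_ne_empty.2 hne))) _ rfl]
  funext a
  have ha : a = boolIndicator (Finset.univ.filter fun i => a i = true) := by
    funext i
    simp [boolIndicator]
  rw [ha]
  exact hind _

theorem card_boolDegreeLT_le (k : ℕ) :
    (boolDegreeLT I k).card ≤ 2 ^ (Fintype.card I + 1) ^ k := by
  set P : Finset (Finset I) := Finset.univ.filter fun S => S.card < k with hP
  calc _ ≤ (Finset.univ : Finset (P → Bool)).card :=
        Finset.card_le_card_of_injOn (fun p (S : P) => p (boolIndicator S.1)) (by simp)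
          fun p hp p' hp' h => eq_of_mem_boolDegreeLT hp hp' fun S hS =>
            congrFun h ⟨S, by simpa [hP] using hS⟩
    _ = 2 ^ P.card := by simp
    _ ≤ 2 ^ (Fintype.card I + 1) ^ k := Nat.pow_le_pow_right two_pos (card_filter_card_lt_le k)

theorem exists_forall_flipAt_mem_boolDegreeLT {K τ : Type*} [Fintype K] [DecidableEq K]
    [Nonempty K] [Fintype τ] {ψ : τ → (I × K → Bool) → Bool} {k d : ℕ}
    (hψ : ∀ t, ∃ Q ∈ lowDegree (I × K) d, ∀ X, |Q X - ((ψ t X).toNat : ℝ)| ≤ 1 / 2 ^ (k + 1))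
    (hτ : Fintype.card τ * 4 ^ Fintype.card I * (16 * (4 * d) ^ k) < Fintype.card K ^ k) :
    ∃ (J : I → K) (X : I × K → Bool), ∀ t, (fun b => ψ t (flipAt J b X)) ∈ boolDegreeLT I k := by
  set Ω := (I → K) × (I × K → Bool)
  set s : Finset (τ × Finset I × (I → Bool)) :=
    Finset.univ ×ˢ Finset.powersetCard k Finset.univ ×ˢ Finset.univ with hs
  have hbad (t : τ × Finset I × (I → Bool)) (ht : t ∈ s) :
      (Finset.univ.filter fun P : Ω =>
        altSum t.2.1 (fun b => ((ψ t.1 (flipAt P.1 b P.2)).toNat : ℤ)) t.2.2 ≠ 0).card *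
        Fintype.card K ^ k ≤ 16 * (4 * d) ^ k * Fintype.card Ω := by
    obtain ⟨Q, hQ, hQψ⟩ := hψ t.1
    obtain rfl : t.2.1.card = k := by simpa [hs] using ht
    exact card_altSum_flipAt_ne_zero_mul_le hQ t.2.1 hQψ t.2.2
  have hs_card : s.card ≤ Fintype.card τ * 4 ^ Fintype.card I := by
    rw [hs, Finset.card_product, Finset.card_product, Finset.card_univ, show 4 = 2 * 2 from rfl,
      mul_pow]
    gcongr
    · exact (Finset.card_le_univ _).trans_eq Fintype.card_finset
    · simp
  obtain ⟨⟨J, X⟩, -, hJX⟩ := exists_mem_forall_not_of_card_mul_lt hbad <| by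
    calc s.card * (16 * (4 * d) ^ k * Fintype.card Ω) ≤
          Fintype.card τ * 4 ^ Fintype.card I * (16 * (4 * d) ^ k) * Fintype.card Ω := by
          rw [← mul_assoc]
          gcongr
      _ < Fintype.card K ^ k * Fintype.card Ω := Nat.mul_lt_mul_of_pos_right hτ Fintype.card_pos
      _ = Finset.univ.card * Fintype.card K ^ k := mul_comm _ _
  refine ⟨J, X, fun t => Finset.mem_filter.2 ⟨Finset.mem_univ _, fun T hT a => ?_⟩⟩
  exact not_ne_iff.1 (hJX (t, T, a) (by simp [hs, hT]))

end BoolDegree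

/-! ### Lattice terms and subformulas -/

section LatticeTerms

open scoped FinsetFamily

variable {L : Type*} [Lattice L] [DecidableEq L]

/-- The values of the lattice terms of depth at most `e` in elements of `C`. -/
def latticeTerms (C : Finset L) : ℕ → Finset L
  | 0 => C
  | e + 1 => (latticeTerms C e ⊻ latticeTerms C e) ∪ (latticeTerms C e ⊼ latticeTerms C e)

variable {C : Finset L} {e : ℕ} {p q : L}

theorem sup_mem_latticeTerms (hp : p ∈ latticeTerms C e) (hq : q ∈ latticeTerms C e) :
    p ⊔ q ∈ latticeTerms C (e + 1) :=
  Finset.mem_union_left _ (Finset.sup_mem_sups hp hq)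

theorem inf_mem_latticeTerms (hp : p ∈ latticeTerms C e) (hq : q ∈ latticeTerms C e) :
    p ⊓ q ∈ latticeTerms C (e + 1) :=
  Finset.mem_union_right _ (Finset.inf_mem_infs hp hq)

theorem mem_latticeTerms_succ (hp : p ∈ latticeTerms C e) : p ∈ latticeTerms C (e + 1) := by
  simpa using sup_mem_latticeTerms hp hp

theorem two_mul_card_latticeTerms_le (C : Finset L) (e : ℕ) :
    2 * (latticeTerms C e).card ≤ (2 * C.card) ^ 2 ^ e := by
  induction e with
  | zero => simp [latticeTerms]
  | succ e ih =>
    calc 2 * (latticeTerms C (e + 1)).card ≤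
          2 * ((latticeTerms C e).card * (latticeTerms C e).card +
            (latticeTerms C e).card * (latticeTerms C e).card) := by
          refine Nat.mul_le_mul_left 2 ((Finset.card_union_le _ _).trans ?_)
          exact Nat.add_le_add (Finset.card_sups_le _ _) (Finset.card_infs_le _ _)
      _ = (2 * (latticeTerms C e).card) ^ 2 := by ring
      _ ≤ ((2 * C.card) ^ 2 ^ e) ^ 2 := Nat.pow_le_pow_left ih 2
      _ = (2 * C.card) ^ 2 ^ (e + 1) := by rw [← pow_mul, pow_succ]

end LatticeTerms

section Subformulas

variable {ι : Type}

namespace DMF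

/-- The subformulas of a formula, itself included, listed with multiplicity. -/
def subformulas : DMF ι → List (DMF ι)
  | leaf i b => [leaf i b]
  | and φ ψ => and φ ψ :: (φ.subformulas ++ ψ.subformulas)
  | or φ ψ => or φ ψ :: (φ.subformulas ++ ψ.subformulas)

theorem self_mem_subformulas (φ : DMF ι) : φ ∈ φ.subformulas := by
  cases φ <;> simp [subformulas]

theorem length_subformulas_lt (φ : DMF ι) : φ.subformulas.length < 2 ^ (φ.depth + 1) := by
  have hgate {a b c d : ℕ} (hc : c < 2 ^ (a + 1)) (hd : d < 2 ^ (b + 1)) :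
      c + d + 1 < 2 ^ (max a b + 1 + 1) := by
    have ha : 2 ^ (a + 1) ≤ 2 ^ (max a b + 1) := Nat.pow_le_pow_right two_pos (by omega)
    have hb : 2 ^ (b + 1) ≤ 2 ^ (max a b + 1) := Nat.pow_le_pow_right two_pos (by omega)
    rw [pow_succ _ (max a b + 1)]
    omega
  induction φ with
  | leaf i b => simp [subformulas, depth]
  | and φ ψ hφ hψ => simpa [subformulas, depth] using hgate hφ hψ
  | or φ ψ hφ hψ => simpa [subformulas, depth] using hgate hφ hψ

theorem eval_comp_mem_latticeTerms {I : Type*} [Fintype I] [DecidableEq I]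
    {C : Finset ((I → Bool) → Bool)} {ρ : (I → Bool) → ι → Bool} {h e : ℕ} {φ : DMF ι}
    (hφ : φ.depth ≤ h + e)
    (hC : ∀ χ ∈ φ.subformulas, χ.depth ≤ h → (fun b => χ.eval (ρ b)) ∈ C) :
    (fun b => φ.eval (ρ b)) ∈ latticeTerms C e := by
  induction e generalizing φ with
  | zero => exact hC φ φ.self_mem_subformulas hφ
  | succ e ih =>
    cases φ with
    | leaf i b => exact mem_latticeTerms_succ (ih (Nat.zero_le _) hC)
    | and φ ψ =>
      obtain ⟨hφ, hψ⟩ := max_le_iff.1 (Nat.succ_le_succ_iff.1 hφ)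
      exact inf_mem_latticeTerms (ih hφ fun χ hχ => hC χ (by simp [subformulas, hχ]))
        (ih hψ fun χ hχ => hC χ (by simp [subformulas, hχ]))
    | or φ ψ =>
      obtain ⟨hφ, hψ⟩ := max_le_iff.1 (Nat.succ_le_succ_iff.1 hφ)
      exact sup_mem_latticeTerms (ih hφ fun χ hχ => hC χ (by simp [subformulas, hχ]))
        (ih hψ fun χ hχ => hC χ (by simp [subformulas, hχ]))

/-- The conjuncts obtained from a formula by splitting the AND gates at distance less than `a` from
the root that are reached through AND gates only. -/
def conjuncts : ℕ → DMF ι → List (DMF ι)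
  | a + 1, and φ ψ => φ.conjuncts a ++ ψ.conjuncts a
  | _, φ => [φ]

theorem length_conjuncts_le (a : ℕ) (φ : DMF ι) : (φ.conjuncts a).length ≤ 2 ^ a := by
  induction a generalizing φ with
  | zero => simp [conjuncts]
  | succ a ih =>
    cases φ with
    | and φ ψ =>
      rw [conjuncts, List.length_append, pow_succ]
      linarith [ih φ, ih ψ]
    | leaf | or => simpa [conjuncts] using Nat.one_le_two_pow

theorem mem_subformulas_of_mem_conjuncts {a : ℕ} {φ ψ χ : DMF ι} (hψ : ψ ∈ φ.conjuncts a)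
    (hχ : χ ∈ ψ.subformulas) : χ ∈ φ.subformulas := by
  induction a generalizing φ with
  | zero => simp_all [conjuncts]
  | succ a ih =>
    cases φ with
    | and φ₁ φ₂ =>
      rcases List.mem_append.1 hψ with hψ | hψ
      · simp [subformulas, ih hψ]
      · simp [subformulas, ih hψ]
    | leaf | or => simp_all [conjuncts]

theorem eval_eq_all_conjuncts (a : ℕ) (φ : DMF ι) (x : ι → Bool) :
    φ.eval x = (φ.conjuncts a).all fun ψ => ψ.eval x := by
  induction a generalizing φ with
  | zero => simp [conjuncts]
  | succ a ih =>
    cases φ with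
    | and φ ψ => rw [conjuncts, List.all_append, ← ih, ← ih, eval]
    | leaf | or => simp [conjuncts]

theorem depth_le_of_mem_conjuncts {a : ℕ} {r : ℝ} {φ ψ : DMF ι} (ha : a ≤ ⌈r⌉₊) (hφ : φ.topAnd r)
    (hψ : ψ ∈ φ.conjuncts a) : ψ.depth ≤ φ.depth - a := by
  induction a generalizing φ r with
  | zero => simp_all [conjuncts]
  | succ a ih =>
    have hr : (a : ℝ) < r := Nat.lt_ceil.1 ha
    have ha' : a ≤ ⌈r - 1⌉₊ := by
      rw [Nat.ceil_sub_one]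
      omega
    cases φ with
    | leaf i b => simp_all [conjuncts, depth]
    | or φ₁ φ₂ => exact absurd hφ.1 (not_le.2 ((Nat.cast_nonneg a).trans_lt hr))
    | and φ₁ φ₂ =>
      rw [depth, Nat.add_sub_add_right]
      rcases List.mem_append.1 hψ with hψ | hψ
      · exact (ih ha' hφ.1 hψ).trans (Nat.sub_le_sub_right (le_max_left _ _) a)
      · exact (ih ha' hφ.2 hψ).trans (Nat.sub_le_sub_right (le_max_right _ _) a)

end DMF

end Subformulas

/-! ### Conjunctions that compute a random function -/

section RandomChoices

theorem exists_card_eq_forall_not_disjoint {U : Type*} [Fintype U]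
    {𝒜 : Finset (Finset U)} {n t : ℕ} (ht : ∀ A ∈ 𝒜, t ≤ A.card)
    (h𝒜 : 𝒜.card * 2 ^ Fintype.card U < (Fintype.card U).choose n * 2 ^ t) :
    ∃ W : Finset U, W.card = n ∧ ∀ A ∈ 𝒜, ¬Disjoint W A := by
  classical
  have hmiss (A : Finset U) (hA : A ∈ 𝒜) :
      ((Finset.powersetCard n Finset.univ).filter (Disjoint · A)).card * 2 ^ t ≤
        2 ^ Fintype.card U := by
    have hsub : (Finset.powersetCard n Finset.univ).filter (Disjoint · A) ⊆ Aᶜ.powerset :=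
      fun W hW => Finset.mem_powerset.2 <|
        Finset.subset_compl_iff_disjoint_right.2 (Finset.mem_filter.1 hW).2
    calc _ ≤ 2 ^ Aᶜ.card * 2 ^ A.card :=
          Nat.mul_le_mul ((Finset.card_le_card hsub).trans_eq (Finset.card_powerset _))
            (Nat.pow_le_pow_right two_pos (ht A hA))
      _ = 2 ^ Fintype.card U := by rw [← pow_add, Finset.card_compl_add_card]
  obtain ⟨W, hW, hWA⟩ := exists_mem_forall_not_of_card_mul_lt (P := fun A W => Disjoint W A) hmiss
    (by rwa [Finset.card_powersetCard, Finset.card_univ])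
  exact ⟨W, (Finset.mem_powersetCard.1 hW).2, hWA⟩

theorem exists_forall_exists_apply_mem {α β τ : Type*} [Fintype α] [Fintype β]
    [Nonempty β] {s : Finset τ} {G : τ → α → Finset β} {M : ℕ}
    (hs : s.card < 2 ^ M)
    (hG : ∀ t ∈ s, M ≤ (Finset.univ.filter fun a => Fintype.card β ≤ 2 * (G t a).card).card) :
    ∃ g : α → β, ∀ t ∈ s, ∃ a, g a ∈ G t a := by
  classical
  have hmiss (t : τ) (ht : t ∈ s) :
      (Finset.univ.filter fun g : α → β => ∀ a, g a ∉ G t a).card * 2 ^ M ≤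
        Fintype.card β ^ Fintype.card α := by
    have hpi : (Finset.univ.filter fun g : α → β => ∀ a, g a ∉ G t a) =
        Fintype.piFinset fun a => (G t a)ᶜ := by
      ext g
      simp
    calc _ ≤ (∏ a, (G t a)ᶜ.card) *
          ∏ a, (if Fintype.card β ≤ 2 * (G t a).card then 2 else 1) := by
          rw [hpi, Fintype.card_piFinset, Finset.prod_ite, Finset.prod_const_one, mul_one,
            Finset.prod_const]
          exact Nat.mul_le_mul_left _ (Nat.pow_le_pow_right two_pos (hG t ht))
      _ ≤ ∏ _a : α, Fintype.card β := by
          rw [← Finset.prod_mul_distrib]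
          refine Finset.prod_le_prod' fun a _ => ?_
          rw [Finset.card_compl]
          split_ifs <;> omega
      _ = Fintype.card β ^ Fintype.card α := by simp
  obtain ⟨g, -, hg⟩ := exists_mem_forall_not_of_card_mul_lt
    (P := fun t (g : α → β) => ∀ a, g a ∉ G t a) hmiss <| by
      rw [Finset.card_univ, Fintype.card_fun, mul_comm]
      exact Nat.mul_lt_mul_of_pos_left hs (Nat.pow_pos Fintype.card_pos)
  exact ⟨g, fun t ht => by simpa using hg t ht⟩

end RandomChoices

section HardFunctions

variable {U : Type*} [Fintype U]

/-- The points `v` with `p u v = false`: the zeros of `p` in the row `u`. -/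
def rowZeros (p : U → U → Bool) (u : U) : Finset U :=
  Finset.univ.filter fun v => p u v = false

variable {M n t : ℕ}

theorem sum_card_rowZeros_le {p : U → U → Bool} (hrow : ∀ u, (rowZeros p u).card ≤ t)
    (hrows : (Finset.univ.filter fun u => (rowZeros p u).Nonempty).card ≤ M) :
    ∑ u, (rowZeros p u).card ≤ M * t := by
  rw [← Finset.sum_filter_of_ne (p := fun u => (rowZeros p u).Nonempty) fun u _ hu =>
    Finset.card_ne_zero.1 hu]
  exact (Finset.sum_le_card_nsmul _ _ t fun u _ => hrow u).trans (Nat.mul_le_mul_right t hrows)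

variable {op : U → U → U} {C : Finset (U → U → Bool)}

theorem exists_card_eq_forall_rowZeros (hop : ∀ w, Function.Injective (op w))
    (hU : Fintype.card U = 2 * n) (ht : C.card * Fintype.card U ^ 3 < 2 ^ t) :
    ∃ W : Finset U, W.card = n ∧ ∀ p ∈ C, ∀ u w, t ≤ (rowZeros p u).card →
      ∃ v ∈ rowZeros p u, op w v ∈ W := by
  classical
  rcases Nat.eq_zero_or_pos n with rfl | hn
  · have : IsEmpty U := Fintype.card_eq_zero_iff.1 hU
    exact ⟨∅, rfl, fun p _ u => isEmptyElim u⟩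
  set 𝒜 : Finset (Finset U) :=
    ((C ×ˢ (Finset.univ ×ˢ Finset.univ)).image fun s =>
      (rowZeros s.1 s.2.1).image (op s.2.2)).filter (t ≤ ·.card)
  have h𝒜_card : 𝒜.card ≤ C.card * Fintype.card U ^ 2 := by
    refine (Finset.card_filter_le _ _).trans (Finset.card_image_le.trans_eq ?_)
    rw [Finset.card_product, Finset.card_product, Finset.card_univ, sq]
  have hbinom : 2 ^ Fintype.card U ≤ Fintype.card U * (Fintype.card U).choose n := by
    rw [hU, pow_mul, ← Nat.centralBinom_eq_two_mul_choose]
    exact Nat.four_pow_le_two_mul_self_mul_centralBinom n hn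
  have hchoose : 0 < (Fintype.card U).choose n := Nat.choose_pos (by omega)
  obtain ⟨W, hW, hhit⟩ := exists_card_eq_forall_not_disjoint (n := n)
    (fun A hA => (Finset.mem_filter.1 hA).2) <| by
      calc 𝒜.card * 2 ^ Fintype.card U ≤ C.card * Fintype.card U ^ 2 *
            (Fintype.card U * (Fintype.card U).choose n) := Nat.mul_le_mul h𝒜_card hbinom
        _ = (Fintype.card U).choose n * (C.card * Fintype.card U ^ 3) := by ring
        _ < (Fintype.card U).choose n * 2 ^ t := Nat.mul_lt_mul_of_pos_left ht hchoose
  refine ⟨W, hW, fun p hp u w hpu => ?_⟩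
  obtain ⟨x, hxW, hx⟩ := Finset.not_disjoint_iff.1 <| hhit ((rowZeros p u).image (op w)) <|
    Finset.mem_filter.2 ⟨Finset.mem_image.2 ⟨(p, u, w), by simp [hp], rfl⟩,
      by rwa [Finset.card_image_of_injective _ (hop w)]⟩
  obtain ⟨v, hv, rfl⟩ := Finset.mem_image.1 hx
  exact ⟨v, hv, hxW⟩

theorem exists_forall_rowZeros_nonempty [Nonempty U]
    (hop : ∀ v, Function.Injective fun w => op w v) {W : Finset U}
    (hW : Fintype.card U ≤ 2 * W.card) (hC : C.card < 2 ^ M) :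
    ∃ g : U → U, ∀ p ∈ C, M ≤ (Finset.univ.filter fun u => (rowZeros p u).Nonempty).card →
      ∃ u, ∃ v ∈ rowZeros p u, op (g u) v ∈ W := by
  classical
  set s := C.filter fun p => M ≤ (Finset.univ.filter fun u => (rowZeros p u).Nonempty).card
  set G : (U → U → Bool) → U → Finset U := fun p u =>
    Finset.univ.filter fun w => ∃ v ∈ rowZeros p u, op w v ∈ W with hG
  have hlarge {p : U → U → Bool} {u : U} (hpu : (rowZeros p u).Nonempty) :
      Fintype.card U ≤ 2 * (G p u).card := by
    obtain ⟨v, hv⟩ := hpu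
    have hbij : Function.Bijective fun w => op w v := Finite.injective_iff_bijective.1 (hop v)
    have hWG : W ⊆ (G p u).image fun w => op w v := fun x hx => by
      obtain ⟨w, rfl⟩ := hbij.2 x
      exact Finset.mem_image_of_mem _ (Finset.mem_filter.2 ⟨Finset.mem_univ w, v, hv, hx⟩)
    have := (Finset.card_le_card hWG).trans Finset.card_image_le
    omega
  obtain ⟨g, hg⟩ := exists_forall_exists_apply_mem (s := s) (G := G)
    ((Finset.card_filter_le _ _).trans_lt hC) fun p hp =>
      (Finset.mem_filter.1 hp).2.trans <| Finset.card_le_card <|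
        Finset.monotone_filter_right _ fun u _ hu => hlarge hu
  refine ⟨g, fun p hp hM => ?_⟩
  simpa [hG] using hg p (Finset.mem_filter.2 ⟨hp, hM⟩)

theorem card_compl_le_sum_card_rowZeros [DecidableEq U] {σ : U → U}
    (hσ : Function.Surjective σ) {W : Finset U} {l : List (U → U → Bool)} {u : U}
    (hW : ∀ v, decide (σ v ∈ W) = l.all fun p => p u v) :
    Wᶜ.card ≤ ∑ p ∈ l.toFinset, (rowZeros p u).card := by
  have hcover : Wᶜ ⊆ (l.toFinset.biUnion fun p => rowZeros p u).image σ := fun x hx => by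
    obtain ⟨v, rfl⟩ := hσ x
    obtain ⟨p, hp, hpv⟩ := List.all_eq_false.1 <|
      (hW v).symm.trans (decide_eq_false (Finset.mem_compl.1 hx))
    exact Finset.mem_image_of_mem _ <| Finset.mem_biUnion.2
      ⟨p, List.mem_toFinset.2 hp, by simpa [rowZeros] using hpv⟩
  exact (Finset.card_le_card hcover).trans (Finset.card_image_le.trans Finset.card_biUnion_le)

/-- Both `f` and `g` are chosen at random. Every conjunct `p` of a conjunction equal to
`fun u v => f (op (g u) v)` must then have few zeros, both within each row and in the number of rows
with a zero, whereas half of all entries are zeros of the conjunction. -/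
theorem exists_forall_list_exists_ne_all (hop_left : ∀ w, Function.Injective (op w))
    (hop_right : ∀ v, Function.Injective fun w => op w v) {N : ℕ} (hU : Fintype.card U = 2 * n)
    (hC : C.card < 2 ^ M) (ht : C.card * Fintype.card U ^ 3 < 2 ^ t)
    (hN : N * (M * t) < Fintype.card U * n) :
    ∃ (f : U → Bool) (g : U → U), ∀ l : List (U → U → Bool), (∀ p ∈ l, p ∈ C) → l.length ≤ N →
      ∃ u v, f (op (g u) v) ≠ l.all fun p => p u v := by
  classical
  have : Nonempty U := Fintype.card_pos_iff.1 (Nat.pos_of_mul_pos_right (Nat.zero_lt_of_lt hN))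
  obtain ⟨W, hW, hWC⟩ := exists_card_eq_forall_rowZeros hop_left hU ht
  obtain ⟨g, hg⟩ := exists_forall_rowZeros_nonempty hop_right (by rw [hU, hW]) hC
  refine ⟨fun x => decide (x ∈ W), g, fun l hlC hlN => ?_⟩
  by_contra! heq
  have havoid {p} (hp : p ∈ l) {u v} (hv : v ∈ rowZeros p u) : op (g u) v ∉ W := fun hmem => by
    have hp_true := List.all_eq_true.1 ((heq u v).symm.trans (decide_eq_true hmem)) p hp
    exact absurd ((Finset.mem_filter.1 hv).2.symm.trans hp_true) Bool.false_ne_true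
  have hsum {p} (hp : p ∈ l) : ∑ u, (rowZeros p u).card ≤ M * t := by
    refine sum_card_rowZeros_le (fun u => ?_) ?_ <;> by_contra! hlarge
    · obtain ⟨v, hv, hmem⟩ := hWC p (hlC p hp) u (g u) hlarge.le
      exact havoid hp hv hmem
    · obtain ⟨u, v, hv, hmem⟩ := hg p (hlC p hp) hlarge.le
      exact havoid hp hv hmem
  have hzeros (u : U) : n ≤ ∑ p ∈ l.toFinset, (rowZeros p u).card := by
    have hcompl : Wᶜ.card = n := by rw [Finset.card_compl]; omega
    exact hcompl.symm.le.trans <| card_compl_le_sum_card_rowZeros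
      (Finite.injective_iff_surjective.1 (hop_left (g u))) (heq u)
  refine hN.not_ge ?_
  calc Fintype.card U * n ≤ ∑ u, ∑ p ∈ l.toFinset, (rowZeros p u).card := by
        simpa using Finset.card_nsmul_le_sum Finset.univ _ n fun u _ => hzeros u
    _ = ∑ p ∈ l.toFinset, ∑ u, (rowZeros p u).card := Finset.sum_comm
    _ ≤ l.toFinset.card * (M * t) :=
        Finset.sum_le_card_nsmul _ _ _ fun p hp => hsum (List.mem_toFinset.1 hp)
    _ ≤ N * (M * t) := Nat.mul_le_mul_right _ (l.toFinset_card_le.trans hlN)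

end HardFunctions

/-! ### Formulas for the Andreev function -/

theorem comp_xor_mem_boolDegreeLT {I : Type*} [Fintype I] [DecidableEq I] {k : ℕ}
    {p : (I → Bool) → Bool} (hp : p ∈ boolDegreeLT I k) (c : I → Bool) :
    (fun b => p fun i => xor (b i) (c i)) ∈ boolDegreeLT I k := by
  refine Finset.mem_filter.2 ⟨Finset.mem_univ _, fun T hT a => ?_⟩
  simpa only [altSum, Bool.xor_right_comm] using
    (Finset.mem_filter.1 hp).2 T hT fun i => xor (a i) (c i)

theorem DMF.exists_forall_eval_flipAt_mem_boolDegreeLT {ι : Type} {I K : Type*} [Fintype I]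
    [DecidableEq I] [Fintype K] [DecidableEq K] [Nonempty K] (φ : DMF ι)
    {z : (I × K → Bool) → ι → Bool} (hz : ∀ i, (fun X => sgn (z X i)) ∈ lowDegree (I × K) 1)
    {q k : ℕ}
    (hφ : 2 ^ (φ.depth + 1) * 4 ^ Fintype.card I * (16 * (4 * 2 ^ (q + 2 * k + 3)) ^ k) ≤
      Fintype.card K ^ k) :
    ∃ (J : I → K) (X : I × K → Bool), ∀ χ ∈ φ.subformulas, χ.depth ≤ 2 * q →
      (fun b => χ.eval (z (flipAt J b X))) ∈ boolDegreeLT I k := by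
  set l := φ.subformulas.filter fun χ => χ.depth ≤ 2 * q
  have hl {χ : DMF ι} : χ ∈ l ↔ χ ∈ φ.subformulas ∧ χ.depth ≤ 2 * q := by simp [l]
  have hlength : l.length < 2 ^ (φ.depth + 1) :=
    (List.length_filter_le _ _).trans_lt φ.length_subformulas_lt
  obtain ⟨J, X, hJX⟩ := exists_forall_flipAt_mem_boolDegreeLT (I := I) (K := K)
    (ψ := fun (t : Fin l.length) X => l[t].eval (z X)) (d := 2 ^ (q + 2 * k + 3)) (k := k)
    (fun t => l[t].exists_lowDegree_approx hz (hl.1 (List.getElem_mem _)).2 k) <| by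
      rw [Fintype.card_fin]
      exact lt_of_lt_of_le (by gcongr) hφ
  refine ⟨J, X, fun χ hχ hdepth => ?_⟩
  obtain ⟨t, ht, rfl⟩ := List.getElem_of_mem (hl.2 ⟨hχ, hdepth⟩)
  exact hJX ⟨t, ht⟩

theorem sgn_parity {n : ℕ} (x : Fin n → Bool) : sgn (parity x) = walsh Finset.univ x := by
  rw [walsh]
  simp only [sgn, Finset.prod_ite, Finset.prod_const, one_pow, mul_one, parity, decide_eq_true_eq]
  split_ifs with h
  · rw [(Nat.odd_iff.2 h).neg_one_pow]
  · rw [(Nat.not_odd_iff_even.1 (mt Nat.odd_iff.1 h)).neg_one_pow]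

theorem parity_flipAt {I : Type*} {n : ℕ} (J : I → Fin n) (b : I → Bool) (X : I × Fin n → Bool)
    (i : I) : parity (fun j => flipAt J b X (i, j)) = xor (b i) (parity fun j => X (i, j)) := by
  apply sgn_injective
  have hflip : walsh Finset.univ (fun j => b i && decide (j = J i)) = sgn (b i) := by
    rw [walsh, Finset.prod_eq_single (J i) (fun j _ hj => by simp [hj]) (by simp)]
    simp
  rw [sgn_xor, sgn_parity, sgn_parity, ← hflip, mul_comm]
  exact walsh_xor _ _ _

section Andreev

variable {m : ℕ}

theorem tabIdx_injective : Function.Injective (tabIdx (m := m)) := fun _ _ h =>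
  funext fun i => finTwoEquiv.symm.injective (congrFun (finFunctionFinEquiv.injective h) i)

/-- The input to the Andreev function that consists of the truth tables of `f` and `g` and of the
blocks `X`. -/
noncomputable def andrInput (f : (Fin m → Bool) → Bool) (g : (Fin m → Bool) → Fin m → Bool)
    (X : Fin (m + m) × Fin (2 ^ m) → Bool) : AndrIdx m → Bool
  | Sum.inl i => f (Function.invFun tabIdx i)
  | Sum.inr (Sum.inl (i, j)) => g (Function.invFun tabIdx i) j
  | Sum.inr (Sum.inr v) => X v

variable (f : (Fin m → Bool) → Bool) (g : (Fin m → Bool) → Fin m → Bool)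

theorem andr_andrInput (X : Fin (m + m) × Fin (2 ^ m) → Bool) {u v : Fin m → Bool}
    (hX : ∀ i, parity (fun j => X (i, j)) = Fin.append u v i) :
    Andr m (andrInput f g X) = f fun j => xor (g u j) (v j) := by
  have hinv (w : Fin m → Bool) : Function.invFun tabIdx (tabIdx w) = w :=
    Function.leftInverse_invFun tabIdx_injective w
  simp only [Andr, andrInput, hinv, hX, Fin.append_left, Fin.append_right]

theorem sgn_andrInput_mem_lowDegree (i : AndrIdx m) :
    (fun X => sgn (andrInput f g X i)) ∈ lowDegree (Fin (m + m) × Fin (2 ^ m)) 1 := by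
  rcases i with i | ⟨i, j⟩ | v
  · exact const_mem_lowDegree (sgn (f _)) 1
  · exact const_mem_lowDegree (sgn (g _ j)) 1
  · exact sgn_apply_mem_lowDegree v

variable {f g}

theorem DMF.exists_andrInput_mem_boolDegreeLT (φ : DMF (AndrIdx m)) {q k : ℕ}
    (hφ : φ.depth + 4 * m + 5 + (q + 2 * k + 5) * k ≤ m * k) :
    ∃ ρ : (Fin (m + m) → Bool) → AndrIdx m → Bool,
      (∀ u v, Andr m (ρ (Fin.append u v)) = f fun j => xor (g u j) (v j)) ∧
      ∀ χ ∈ φ.subformulas, χ.depth ≤ 2 * q →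
        (fun b => χ.eval (ρ b)) ∈ boolDegreeLT (Fin (m + m)) k := by
  obtain ⟨J, X, hJX⟩ := φ.exists_forall_eval_flipAt_mem_boolDegreeLT
    (sgn_andrInput_mem_lowDegree f g) (q := q) (k := k) <| by
      calc 2 ^ (φ.depth + 1) * 4 ^ Fintype.card (Fin (m + m)) *
            (16 * (4 * 2 ^ (q + 2 * k + 3)) ^ k) =
            2 ^ (φ.depth + 4 * m + 5 + (q + 2 * k + 5) * k) := by
            rw [Fintype.card_fin, show 4 = 2 ^ 2 from rfl, show 16 = 2 ^ 4 from rfl]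
            simp only [← pow_mul, ← pow_add]
            ring
        _ ≤ Fintype.card (Fin (2 ^ m)) ^ k := by
            rw [Fintype.card_fin, ← pow_mul]
            exact Nat.pow_le_pow_right two_pos hφ
  set c : Fin (m + m) → Bool := fun i => parity fun j => X (i, j)
  refine ⟨fun b => andrInput f g (flipAt J (fun i => xor (b i) (c i)) X), fun u v => ?_,
    fun χ hχ hdepth => comp_xor_mem_boolDegreeLT (hJX χ hχ hdepth) c⟩
  exact andr_andrInput f g _ fun i => by simp [parity_flipAt, c]

theorem card_latticeTerms_boolDegreeLT_lt (m e : ℕ) {k : ℕ} (hk : k ≠ 0) :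
    (latticeTerms (boolDegreeLT (Fin (m + m)) k) e).card < 2 ^ (2 ^ e * (2 * m + 2) ^ k) := by
  have hexp : (2 * m + 1) ^ k + 1 ≤ (2 * m + 2) ^ k :=
    Nat.pow_lt_pow_left (Nat.lt_succ_self _) hk
  have hbase : 2 * (boolDegreeLT (Fin (m + m)) k).card ≤ 2 ^ (2 * m + 2) ^ k := by
    calc _ ≤ 2 * 2 ^ (2 * m + 1) ^ k := by
          simpa [two_mul m] using card_boolDegreeLT_le (I := Fin (m + m)) k
      _ = 2 ^ ((2 * m + 1) ^ k + 1) := (pow_succ' _ _).symm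
      _ ≤ 2 ^ (2 * m + 2) ^ k := Nat.pow_le_pow_right two_pos hexp
  have hterms : 2 * (latticeTerms (boolDegreeLT (Fin (m + m)) k) e).card ≤
      2 ^ (2 ^ e * (2 * m + 2) ^ k) := by
    rw [mul_comm (2 ^ e), pow_mul]
    exact (two_mul_card_latticeTerms_le _ e).trans (Nat.pow_le_pow_left hbase _)
  have hpos := Nat.two_pow_pos (2 ^ e * (2 * m + 2) ^ k)
  omega

theorem exists_forall_list_latticeTerms_ne_all {e k N : ℕ} (hk : k ≠ 0)
    (hN : 6 * N * (2 ^ e * (2 * m + 2) ^ k) ^ 2 < 4 ^ m) (hm : m ≠ 0) :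
    ∃ (f : (Fin m → Bool) → Bool) (g : (Fin m → Bool) → Fin m → Bool),
      ∀ l : List ((Fin (m + m) → Bool) → Bool),
        (∀ p ∈ l, p ∈ latticeTerms (boolDegreeLT (Fin (m + m)) k) e) → l.length ≤ N →
        ∃ u v, (f fun j => xor (g u j) (v j)) ≠ l.all fun p => p (Fin.append u v) := by
  set M : ℕ := 2 ^ e * (2 * m + 2) ^ k
  set C := (latticeTerms (boolDegreeLT (Fin (m + m)) k) e).image fun p u v => p (Fin.append u v)
  have hcard : Fintype.card (Fin m → Bool) = 2 ^ m := by simp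
  have hhalf : 2 ^ m = 2 * 2 ^ (m - 1) := (mul_pow_sub_one hm 2).symm
  have hC : C.card < 2 ^ M :=
    Finset.card_image_le.trans_lt (card_latticeTerms_boolDegreeLT_lt m e hk)
  have hM : 2 * m + 2 ≤ M :=
    (Nat.le_self_pow hk _).trans (Nat.le_mul_of_pos_left _ (Nat.two_pow_pos e))
  obtain ⟨f, g, hfg⟩ := exists_forall_list_exists_ne_all (C := C) (t := M + 3 * m) (N := N)
    (op := fun w v j => xor (w j) (v j)) (n := 2 ^ (m - 1))
    (fun w v v' h => funext fun j => by simpa using congrFun h j)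
    (fun v w w' h => funext fun j => by simpa using congrFun h j) (hcard.trans hhalf) hC
    (by rw [hcard, ← pow_mul, mul_comm m, pow_add]; gcongr) <| by
      have hsquare : 2 ^ m * 2 ^ m = 4 ^ m := (mul_pow 2 2 m).symm
      have ht : N * (M * (M + 3 * m)) ≤ N * (M * (3 * M)) := by gcongr; omega
      rw [hcard]
      nlinarith
  refine ⟨f, g, fun l hl hlN => ?_⟩
  obtain ⟨u, v, huv⟩ := hfg (l.map fun p u v => p (Fin.append u v))
    (fun _ h => by
      obtain ⟨p, hp, rfl⟩ := List.mem_map.1 h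
      exact Finset.mem_image_of_mem _ (hl p hp)) (by simpa using hlN)
  exact ⟨u, v, by simpa [List.all_map, Function.comp_def] using huv⟩

theorem DMF.exists_eval_ne_andr {r : ℝ} (φ : DMF (AndrIdx m)) (hφ : φ.topAnd r) {a q e k : ℕ}
    (ha : a ≤ ⌈r⌉₊) (hdepth : φ.depth ≤ a + 2 * q + e)
    (hrestrict : φ.depth + 4 * m + 5 + (q + 2 * k + 5) * k ≤ m * k)
    (hcount : 6 * 2 ^ a * (2 ^ e * (2 * m + 2) ^ k) ^ 2 < 4 ^ m) :
    ∃ z, φ.eval z ≠ Andr m z := by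
  obtain ⟨hm, hk⟩ : m ≠ 0 ∧ k ≠ 0 := mul_ne_zero_iff.1 (by omega)
  obtain ⟨f, g, hfg⟩ := exists_forall_list_latticeTerms_ne_all hk hcount hm
  obtain ⟨ρ, hAndr, hρ⟩ := φ.exists_andrInput_mem_boolDegreeLT (f := f) (g := g) hrestrict
  obtain ⟨u, v, huv⟩ := hfg ((φ.conjuncts a).map fun ψ b => ψ.eval (ρ b))
    (fun _ h => by
      obtain ⟨ψ, hψ, rfl⟩ := List.mem_map.1 h
      have hψ_depth : ψ.depth ≤ φ.depth - a := depth_le_of_mem_conjuncts ha hφ hψ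
      exact eval_comp_mem_latticeTerms (by omega) fun χ hχ hχ_depth =>
        hρ χ (mem_subformulas_of_mem_conjuncts hψ hχ) hχ_depth)
    (by simpa using φ.length_conjuncts_le a)
  refine ⟨ρ (Fin.append u v), ?_⟩
  rw [hAndr, φ.eval_eq_all_conjuncts a]
  simpa [List.all_map, Function.comp_def] using huv.symm

end Andreev

theorem eventually_mul_pow_lt_two_rpow {ε : ℝ} (hε : 0 < ε) (c : ℝ) (k : ℕ) :
    ∀ᶠ m : ℕ in Filter.atTop, c * (2 * m + 2) ^ k < (2 : ℝ) ^ (ε * m) := by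
  have hr : (1 : ℝ) < 2 ^ ε := Real.one_lt_rpow one_lt_two hε
  have hlim := (((tendsto_pow_const_div_const_pow_of_one_lt k hr).comp
    (Filter.tendsto_add_atTop_nat 1)).const_mul (c * 2 ^ k * 2 ^ ε))
  rw [mul_zero] at hlim
  filter_upwards [hlim.eventually_lt_const one_pos] with m hm
  have hpow : (2 : ℝ) ^ (ε * m) = (2 ^ ε) ^ m := by
    rw [Real.rpow_mul two_pos.le, Real.rpow_natCast]
  rw [hpow, ← div_lt_one (by positivity)]
  convert hm using 1
  rw [Function.comp_apply, show (2 * m + 2 : ℝ) = 2 * (m + 1) by ring, mul_pow]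
  push_cast
  field_simp
  ring

theorem counting_bound_of_le {α β ε : ℝ} {m a e k : ℕ} (hαβ : α + 2 * β + ε = 2)
    (ha : (a : ℝ) ≤ α * m + 1) (he : (e : ℝ) ≤ β * m + 3)
    (hm : 768 * (2 * m + 2 : ℝ) ^ (2 * k) < 2 ^ (ε * m)) :
    6 * 2 ^ a * (2 ^ e * (2 * m + 2) ^ k) ^ 2 < 4 ^ m := by
  have ha' : (2 : ℝ) ^ a ≤ 2 ^ (α * m + 1) := by
    rw [← Real.rpow_natCast]
    exact Real.rpow_le_rpow_of_exponent_le one_le_two ha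
  have he' : (2 : ℝ) ^ e ≤ 2 ^ (β * m + 3) := by
    rw [← Real.rpow_natCast]
    exact Real.rpow_le_rpow_of_exponent_le one_le_two he
  rw [← Nat.cast_lt (α := ℝ)]
  push_cast
  calc (6 : ℝ) * 2 ^ a * (2 ^ e * (2 * m + 2) ^ k) ^ 2 ≤
        6 * 2 ^ (α * m + 1) * (2 ^ (β * m + 3) * (2 * m + 2) ^ k) ^ 2 := by gcongr
    _ = 768 * (2 * m + 2 : ℝ) ^ (2 * k) * (2 ^ (α * m) * (2 ^ (β * m)) ^ 2) := by
        rw [Real.rpow_add two_pos, Real.rpow_add two_pos, pow_mul']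
        norm_num
        ring
    _ < 2 ^ (ε * m) * (2 ^ (α * m) * (2 ^ (β * m)) ^ 2) := by gcongr
    _ = 4 ^ m := by
        rw [← Real.rpow_mul_natCast two_pos.le, ← Real.rpow_add two_pos, ← Real.rpow_add two_pos,
          show (4 : ℝ) = 2 ^ (2 : ℝ) by norm_num, ← Real.rpow_mul_natCast two_pos.le]
        congr 1
        push_cast
        linear_combination (m : ℝ) * hαβ

theorem restriction_bound_of_le {δ : ℝ} {D m q k : ℕ} (hk : 9 ≤ k * δ) (hD : D ≤ 4 * m)
    (hq : (q : ℝ) ≤ (1 - δ) * m) (hm : (2 * k + 5) * k + 5 ≤ m) :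
    D + 4 * m + 5 + (q + 2 * k + 5) * k ≤ m * k := by
  have hqk : q * k + 9 * m ≤ m * k := by
    have : (q : ℝ) * k + 9 * m ≤ m * k := by
      nlinarith [mul_le_mul_of_nonneg_right hq k.cast_nonneg,
        mul_le_mul_of_nonneg_right hk (m.cast_nonneg (α := ℝ))]
    exact_mod_cast this
  nlinarith

theorem exists_forall_eval_ne_andr {α ε : ℝ} (hα : 0 ≤ α) (hε : 0 < ε) (hεα : ε ≤ 1 - α / 2) :
    ∃ m₀ : ℕ, ∀ m ≥ m₀, ∀ (φ : DMF (AndrIdx m)) (r : ℝ),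
      (φ.depth : ℝ) ≤ (3 + α / 2 - ε) * m → φ.topAnd r → ⌈α * m⌉₊ ≤ ⌈r⌉₊ →
        ∃ z, φ.eval z ≠ Andr m z := by
  set δ := ε / 4 with hδ
  set β := 1 - α / 2 - ε / 2 with hβ
  set k := ⌈9 / δ⌉₊
  have hk : 9 ≤ k * δ := (div_le_iff₀ (by positivity)).1 (Nat.le_ceil _)
  obtain ⟨m₀, hm₀⟩ := Filter.eventually_atTop.1
    ((eventually_mul_pow_lt_two_rpow hε 768 (2 * k)).and
      (Filter.eventually_ge_atTop ((2 * k + 5) * k + 5)))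
  refine ⟨m₀, fun m hm φ r hdepth hφ hr => ?_⟩
  obtain ⟨hm_exp, hm_large⟩ := hm₀ m hm
  have hm_nonneg : (0 : ℝ) ≤ m := m.cast_nonneg
  set q := ⌊(1 - δ) * m⌋₊
  have hq : (q : ℝ) ≤ (1 - δ) * m := Nat.floor_le (mul_nonneg (by linarith) hm_nonneg)
  have hq' : (1 - δ) * m < q + 1 := Nat.lt_floor_add_one _
  set e := ⌈β * m⌉₊ + 2 with he_def
  have he : (e : ℝ) ≤ β * m + 3 := by
    have := Nat.ceil_lt_add_one (mul_nonneg (by linarith : 0 ≤ β) hm_nonneg)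
    push_cast [he_def]
    linarith
  have hdepth' : φ.depth ≤ ⌈α * m⌉₊ + 2 * q + e := by
    have : (φ.depth : ℝ) ≤ ⌈α * m⌉₊ + 2 * q + (⌈β * m⌉₊ + 2) := by
      nlinarith [Nat.le_ceil (α * m), Nat.le_ceil (β * m)]
    exact_mod_cast this
  have hdepth_four : φ.depth ≤ 4 * m := by
    have : (φ.depth : ℝ) ≤ 4 * m := hdepth.trans (by gcongr; linarith)
    exact_mod_cast this
  exact φ.exists_eval_ne_andr hφ hr hdepth'
    (restriction_bound_of_le hk hdepth_four hq hm_large)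
    (counting_bound_of_le (by rw [hβ]; ring)
      (Nat.ceil_lt_add_one (mul_nonneg hα hm_nonneg)).le he hm_exp)

theorem andreev_depth_lower_bound_general (α ε : ℝ) (hα : α ≤ 2) (hε : 0 < ε) :
    ∃ m₀ : ℕ, ∀ m ≥ m₀,
      ¬ ∃ φ : DMF (AndrIdx m),
          (φ.depth : ℝ) ≤ (3 + α / 2 - ε) * Real.logb 2 ((2 : ℝ) ^ m) ∧
          φ.topAnd (α * Real.logb 2 ((2 : ℝ) ^ m)) ∧
          (∀ z : AndrIdx m → Bool, φ.eval z = Andr m z) := by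
  obtain ⟨α', ε', hα', hε', hεα', hle, hrate⟩ : ∃ α' ε' : ℝ, 0 ≤ α' ∧ 0 < ε' ∧ ε' ≤ 1 - α' / 2 ∧
      α' ≤ max α 0 ∧ 3 + α / 2 - ε ≤ 3 + α' / 2 - ε' := by
    refine ⟨max (min α (2 - ε)) 0, min (ε / 2) 1, le_max_right _ _, by positivity, ?_,
      max_le_max_right 0 (min_le_left _ _), ?_⟩
    · rcases max_cases (min α (2 - ε)) 0 with h | h <;>
        linarith [min_le_right α (2 - ε), min_le_left (ε / 2) 1, min_le_right (ε / 2) 1]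
    · rcases min_cases α (2 - ε) with h | h <;>
        linarith [le_max_left (min α (2 - ε)) 0, min_le_left (ε / 2) 1]
  obtain ⟨m₀, hm₀⟩ := exists_forall_eval_ne_andr hα' hε' hεα'
  refine ⟨m₀, fun m hm ⟨φ, hdepth, hφ, hcomp⟩ => ?_⟩
  rw [Real.logb_pow, Real.logb_self_eq_one one_lt_two, mul_one] at hdepth hφ
  have hceil : ⌈α' * m⌉₊ ≤ ⌈α * m⌉₊ := Nat.ceil_le.2 <| by
    calc α' * m ≤ max α 0 * m := by gcongr
      _ = max (α * m) 0 := by rw [max_mul_of_nonneg _ _ m.cast_nonneg, zero_mul]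
      _ ≤ ⌈α * m⌉₊ := max_le (Nat.le_ceil _) (Nat.cast_nonneg _)
  obtain ⟨z, hz⟩ := hm₀ m hm φ (α * m) (hdepth.trans (by gcongr)) hφ hceil
  exact hz (hcomp z)

/-- Theorem 4.2, depth form: for constants `0 < α < 2` and
`ε > 0`, for all large `m` (with `n = 2^m`), no De Morgan formula of depth at
most `(3 + α/2 - ε) log₂ n` whose gates at distance less than `α log₂ n` from
the root are all AND gates computes the modified Andreev function. -/
theorem andreev_depth_lower_bound (α ε : ℝ) (hα0 : 0 < α) (hα2 : α < 2) (hε : 0 < ε) :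
    ∃ m₀ : ℕ, ∀ m ≥ m₀,
      ¬ ∃ φ : DMF (AndrIdx m),
          (φ.depth : ℝ) ≤ (3 + α / 2 - ε) * Real.logb 2 ((2 : ℝ) ^ m) ∧
          φ.topAnd (α * Real.logb 2 ((2 : ℝ) ^ m)) ∧
          (∀ z : AndrIdx m → Bool, φ.eval z = Andr m z) :=
  andreev_depth_lower_bound_general α ε hα2.le hε
end

section
/- Define p_n = 2·ln(log₂ n)/n for n ≥ 2. Then (1 − (1 − p_n)^n)^{2·log₂ n} tends to 1 as n → ∞. -/
/-! A block is entirely fixed with probability `(1 - p) ^ m ≤ exp (-m p)`, so by Bernoulli's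
inequality (the union bound over blocks) all `k` blocks are alive with probability at least
`1 - k exp (-m p)`. For `m = n`, `p = 2 ln (log₂ n) / n` and `k = 2 log₂ n` the error is
`2 / log₂ n`. -/

open Filter Topology Asymptotics Set

theorem tendsto_one_sub_rpow_nhds_one {α : Type*} {l : Filter α} {q k : α → ℝ}
    (hq : ∀ᶠ x in l, q x ∈ Icc 0 1) (hk : ∀ᶠ x in l, 1 ≤ k x)
    (hkq : Tendsto (fun x => k x * q x) l (𝓝 0)) :
    Tendsto (fun x => (1 - q x) ^ k x) l (𝓝 1) := by
  have hlower : Tendsto (fun x => 1 - k x * q x) l (𝓝 1) := by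
    simpa only [sub_zero] using hkq.const_sub 1
  refine tendsto_of_tendsto_of_tendsto_of_le_of_le' hlower tendsto_const_nhds ?_ ?_
  · filter_upwards [hq, hk] with x ⟨_, hq1⟩ hk1
    simpa only [mul_neg, ← sub_eq_add_neg] using
      one_add_mul_self_le_rpow_one_add (neg_le_neg hq1) hk1
  · filter_upwards [hq, hk] with x ⟨hq0, hq1⟩ hk1
    exact Real.rpow_le_one (sub_nonneg.2 hq1) (sub_le_self 1 hq0) (zero_le_one.trans hk1)

theorem one_sub_pow_le_exp_neg_mul {p : ℝ} (hp : p ≤ 1) (m : ℕ) :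
    (1 - p) ^ m ≤ Real.exp (-(m * p)) :=
  calc (1 - p) ^ m ≤ Real.exp (-p) ^ m :=
        pow_le_pow_left₀ (sub_nonneg.2 hp) (Real.one_sub_le_exp_neg p) m
    _ = Real.exp (-(m * p)) := by rw [← Real.exp_nat_mul, mul_neg]

theorem random_restriction_blocks_alive_general {α : Type*} {l : Filter α}
    {p k : α → ℝ} {m : α → ℕ}
    (hp : ∀ᶠ x in l, p x ∈ Icc 0 1) (hk : ∀ᶠ x in l, 1 ≤ k x)
    (hkp : Tendsto (fun x => k x * Real.exp (-(m x * p x))) l (𝓝 0)) :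
    Tendsto (fun x => (1 - (1 - p x) ^ m x) ^ k x) l (𝓝 1) := by
  have hq : ∀ᶠ x in l, (1 - p x) ^ m x ∈ Icc 0 1 := by
    filter_upwards [hp] with x ⟨hp0, hp1⟩
    exact ⟨pow_nonneg (sub_nonneg.2 hp1) _,
      pow_le_one₀ (sub_nonneg.2 hp1) (sub_le_self 1 hp0)⟩
  refine tendsto_one_sub_rpow_nhds_one hq hk (squeeze_zero' ?_ ?_ hkp)
  · filter_upwards [hq, hk] with x hqx hkx
    exact mul_nonneg (zero_le_one.trans hkx) hqx.1
  · filter_upwards [hp, hk] with x hpx hkx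
    exact mul_le_mul_of_nonneg_left (one_sub_pow_le_exp_neg_mul hpx.2 _)
      (zero_le_one.trans hkx)

theorem tendsto_mul_exp_neg_mul_log_atTop {c : ℝ} (hc : 1 < c) :
    Tendsto (fun x : ℝ => x * Real.exp (-(c * Real.log x))) atTop (𝓝 0) := by
  refine (tendsto_rpow_neg_atTop (sub_pos.2 hc)).congr' ?_
  filter_upwards [eventually_gt_atTop 0] with x hx
  calc x ^ (-(c - 1)) = x ^ (1 + -c) := by ring_nf
    _ = x * x ^ (-c) := by rw [Real.rpow_add hx, Real.rpow_one]
    _ = x * Real.exp (-(c * Real.log x)) := by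
      rw [Real.rpow_def_of_pos hx, mul_neg, mul_comm c]

theorem tendsto_log_logb_div_atTop {b : ℝ} (hb : 1 < b) :
    Tendsto (fun x => Real.log (Real.logb b x) / x) atTop (𝓝 0) := by
  have hlogb : (fun x => Real.logb b x) =o[atTop] (id : ℝ → ℝ) := by
    simpa only [Real.logb, div_eq_inv_mul] using
      Real.isLittleO_log_id_atTop.const_mul_left (Real.log b)⁻¹
  exact ((Real.isLittleO_log_id_atTop.comp_tendsto (Real.tendsto_logb_atTop hb)).trans
    hlogb).tendsto_div_nhds_zero

theorem tendsto_logb_natCast_atTop {b : ℝ} (hb : 1 < b) :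
    Tendsto (fun n : ℕ => Real.logb b n) atTop atTop :=
  (Real.tendsto_logb_atTop hb).comp tendsto_natCast_atTop_atTop

/-- The probability `p_n = 2 ln (log₂ n) / n` with which the restriction leaves a variable free.
It lies in `[0, 1]` only for large `n`, and division by zero makes it `0` at `n = 0`. -/
noncomputable def freeProb (n : ℕ) : ℝ :=
  2 * Real.log (Real.logb 2 n) / n

theorem eventually_freeProb_mem_Icc : ∀ᶠ n in atTop, freeProb n ∈ Icc 0 1 := by
  have hlim : Tendsto (fun n => freeProb n) atTop (𝓝 0) := by
    simpa only [freeProb, mul_zero, Function.comp_def, mul_div_assoc] using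
      ((tendsto_log_logb_div_atTop one_lt_two).comp tendsto_natCast_atTop_atTop).const_mul 2
  filter_upwards [(tendsto_logb_natCast_atTop one_lt_two).eventually_ge_atTop 1,
    hlim.eventually_le_const one_pos] with n hlogb hle
  exact ⟨div_nonneg (mul_nonneg zero_le_two (Real.log_nonneg hlogb)) n.cast_nonneg, hle⟩

theorem tendsto_two_mul_logb_mul_exp_neg_mul_freeProb :
    Tendsto (fun n : ℕ => 2 * Real.logb 2 n * Real.exp (-(n * freeProb n))) atTop (𝓝 0) := by
  have hlim := ((tendsto_mul_exp_neg_mul_log_atTop one_lt_two).comp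
    (tendsto_logb_natCast_atTop one_lt_two)).const_mul 2
  rw [mul_zero] at hlim
  refine hlim.congr' ?_
  filter_upwards [eventually_ne_atTop 0] with n hn
  rw [freeProb, mul_div_cancel₀ _ (Nat.cast_ne_zero.2 hn), mul_assoc, Function.comp_apply]

/-- with `p_n = 2 ln(log₂ n) / n`, the quantity
`(1 - (1 - p_n)^n)^{2 log₂ n}` tends to `1` as `n → ∞`. -/
theorem random_restriction_blocks_alive :
    Filter.Tendsto
      (fun n : ℕ =>
        (1 - (1 - 2 * Real.log (Real.logb 2 n) / n) ^ n) ^ (2 * Real.logb 2 n))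
      Filter.atTop (nhds 1) :=
  random_restriction_blocks_alive_general eventually_freeProb_mem_Icc
    (((tendsto_logb_natCast_atTop one_lt_two).const_mul_atTop two_pos).eventually_ge_atTop 1)
    tendsto_two_mul_logb_mul_exp_neg_mul_freeProb
end
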